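/- arXiv:1610.02566 — 3 statements merged into one kernel-verified Lean document; each statement's English description precedes it below -/
import Mathlib

section
/- Under the energy-harvesting block-transmission model, for every r in the interval (0, 1/η_U], the estimation error satisfies P(ε < err_I) ≥ 1 − f_bt(μ_I, ϱ_I, r), where err_I = P_x / (1 + (μ_E/σ_w²)(1/η_U − r)), μ_I = (1/η_L)·max{r_E − 1, 1}·min{Q·η_U, 1}, and ϱ_I = (ϱ_E/μ_E²)·(1/η_L²)·(1/Q)·min{Q·η_U, 1}. -/
open Matrix Finset MeasureTheory ProbabilityTheory

/-- Squared Euclidean norm of `u_i`, the conjugate transpose of the `i`-th row of `Us`. -/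
noncomputable def rowNormSq {N s : ℕ} (Us : Matrix (Fin N) (Fin s) ℂ) (i : Fin N) : ℝ :=
  ∑ j, ‖Us i j‖ ^ 2

/-- The (0-based) global index `(k−1)·Q + t` of sample `t` of block `k`. -/
def blockIdx (nT Q : ℕ) (k : Fin nT) (t : Fin Q) : Fin (nT * Q) := finProdFinEquiv (k, t)

/-- The block containing global index `i`. -/
def blockOf (nT Q : ℕ) (i : Fin (nT * Q)) : Fin nT := (finProdFinEquiv.symm i).1

/-- `h(a) = (1+a)·log(1+a) − a`. -/
noncomputable def hfun (a : ℝ) : ℝ := (1 + a) * Real.log (1 + a) - a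

/-- `f_bt(μ, ϱ, r) = 2s·exp(−(ϱ/μ²)·h(μ·r/ϱ))`. -/
noncomputable def fbt (s : ℕ) (μ ϱ r : ℝ) : ℝ :=
  2 * s * Real.exp (-(ϱ / μ ^ 2) * hfun (μ * r / ϱ))

/-
Write `Bₖ` for the Gram matrix of the rows of `U_s` in block `k`, so that `∑ₖ Bₖ = 1`. Then
`U_s† G U_s = ∑ₖ pₖ Bₖ` is a sum of independent scalars times fixed positive semidefinite matrices,
and a one-sided matrix Bennett inequality for `∑ₖ ξₖ Bₖ`, with `ξₖ` the centred energy shortfall of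
block `k`, is all that is needed: where its largest eigenvalue is below `r`, comparison in the
Loewner order bounds the trace of the inverse by `err_I`.

Since only the scalars are random, Lieb's concavity theorem can be avoided. If `0 ≤ B ≤ b`, then
`f x = tr (e^(K + x B) B)`, the derivative of `g x = tr e^(K + x B)`, satisfies `f' ≤ b f`: the
logarithmic mean of two exponentials is at most their arithmetic mean, an inequality in two scalars
that transfers to traces. Grönwall's lemma gives
`tr e^(K + x B) ≤ tr e^K + (e^(b x) - 1) / b * tr (e^K B)`. Averaging over `x = ξₖ` replaces the
middle factor by its mean, and Klein's inequality `tr e^K + tr (e^K (L - K)) ≤ tr e^L` puts that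
mean back into the exponent. Iterating over the blocks bounds `𝔼 tr exp (θ ∑ₖ ξₖ Bₖ)`, and Markov's
inequality with the optimal `θ` concludes.
-/

section RealAnalysis

open Real Set Filter Topology

lemma mul_sinh_le_sq_mul_cosh (x : ℝ) : x * sinh x ≤ x ^ 2 * cosh x := by
  wlog hx : 0 ≤ x generalizing x
  · simpa using this (-x) (by linarith)
  have hmvt : sinh x - sinh 0 ≤ cosh x * (x - 0) := by
    refine (convex_Icc 0 x).image_sub_le_mul_sub_of_deriv_le continuous_sinh.continuousOn
      differentiable_sinh.differentiableOn (fun y hy => ?_) 0 ⟨le_rfl, hx⟩ x ⟨hx, le_rfl⟩ hx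
    rw [interior_Icc] at hy
    simpa [abs_of_pos hy.1, abs_of_nonneg hx] using hy.2.le
  rw [sinh_zero, sub_zero, sub_zero] at hmvt
  nlinarith [mul_le_mul_of_nonneg_left hmvt hx]

lemma exp_sub_exp_mul_sub_le (x y : ℝ) :
    (exp y - exp x) * (y - x) ≤ (exp x + exp y) / 2 * (y - x) ^ 2 := by
  obtain ⟨m, δ, rfl, rfl⟩ : ∃ m δ : ℝ, x = m - δ ∧ y = m + δ :=
    ⟨(x + y) / 2, (y - x) / 2, by ring, by ring⟩
  have key := mul_le_mul_of_nonneg_left (mul_sinh_le_sq_mul_cosh δ) (exp_pos m).le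
  rw [sinh_eq, cosh_eq] at key
  rw [sub_eq_add_neg m δ, exp_add, exp_add]
  linarith

lemma hasDerivAt_of_subgradient {f g : ℝ → ℝ} {x : ℝ}
    (hsub : ∀ y z, g y + f y * (z - y) ≤ g z) (hf : ContinuousAt f x) :
    HasDerivAt g (f x) x := by
  rw [hasDerivAt_iff_tendsto_slope]
  have hf' : Tendsto f (𝓝[≠] x) (𝓝 (f x)) := hf.mono_left nhdsWithin_le_nhds
  have hmin : Tendsto (fun y => min (f x) (f y)) (𝓝[≠] x) (𝓝 (f x)) := by
    simpa using (tendsto_const_nhds (x := f x)).min hf'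
  have hmax : Tendsto (fun y => max (f x) (f y)) (𝓝[≠] x) (𝓝 (f x)) := by
    simpa using (tendsto_const_nhds (x := f x)).max hf'
  refine tendsto_of_tendsto_of_tendsto_of_le_of_le' hmin hmax ?_ ?_ <;>
    filter_upwards [self_mem_nhdsWithin] with y hy <;>
    rcases lt_or_gt_of_ne hy with hyx | hxy
  · rw [slope_comm, slope_def_field, le_div_iff₀ (sub_pos.2 hyx)]
    nlinarith [hsub y x, min_le_right (f x) (f y)]
  · rw [slope_def_field, le_div_iff₀ (sub_pos.2 hxy)]
    nlinarith [hsub x y, min_le_left (f x) (f y)]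
  · rw [slope_comm, slope_def_field, div_le_iff₀ (sub_pos.2 hyx)]
    nlinarith [hsub x y, le_max_left (f x) (f y)]
  · rw [slope_def_field, div_le_iff₀ (sub_pos.2 hxy)]
    nlinarith [hsub y x, le_max_right (f x) (f y)]

lemma le_exp_mul_of_sub_le_average {f : ℝ → ℝ} {b : ℝ} (hf : Continuous f)
    (hfb : ∀ x y, x < y → f y - f x ≤ (f x + f y) / 2 * (b * (y - x))) {x y : ℝ} (hxy : x ≤ y) :
    f y ≤ exp (b * (y - x)) * f x := by
  have hslope : ∀ z ∈ Ico x y, ∀ c, b * f z < c →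
      ∃ᶠ w in 𝓝[>] z, (w - z)⁻¹ * (f w - f z) < c := by
    intro z _ c hc
    have hlim : Tendsto (fun w => (f z + f w) / 2 * b) (𝓝[>] z) (𝓝 (b * f z)) := by
      have hcont : Continuous fun w => (f z + f w) / 2 * b := by fun_prop
      convert (hcont.tendsto z).mono_left nhdsWithin_le_nhds using 2
      ring
    refine Eventually.frequently ?_
    filter_upwards [hlim.eventually_lt_const hc, self_mem_nhdsWithin] with w hwc hzw
    refine lt_of_le_of_lt ?_ hwc
    rw [inv_mul_le_iff₀ (sub_pos.2 hzw)]
    linarith [hfb z w hzw]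
  have hgronwall := le_gronwallBound_of_liminf_deriv_right_le (δ := f x) (K := b) (ε := 0)
    hf.continuousOn hslope le_rfl (fun z _ => (add_zero _).ge) y ⟨hxy, le_rfl⟩
  rwa [gronwallBound_ε0, mul_comm] at hgronwall

lemma le_add_of_subgradient_of_exp_growth {f g : ℝ → ℝ} {b : ℝ} (hb : 0 < b)
    (hf : Continuous f) (hsub : ∀ y z, g y + f y * (z - y) ≤ g z)
    (hgrowth : ∀ x y, x ≤ y → f y ≤ exp (b * (y - x)) * f x) (x : ℝ) :
    g x ≤ g 0 + (exp (b * x) - 1) / b * f 0 := by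
  let G : ℝ → ℝ := fun y => g y - (exp (b * y) - 1) / b * f 0
  have hG : ∀ y, HasDerivAt G (f y - exp (b * y) * f 0) y := by
    intro y
    have hexp : HasDerivAt (fun y => (exp (b * y) - 1) / b * f 0) (exp (b * y) * f 0) y := by
      have hlin : HasDerivAt (fun y => b * y) b y := by simpa using (hasDerivAt_id y).const_mul b
      refine (((hlin.exp.sub_const 1).div_const b).mul_const (f 0)).congr_deriv ?_
      rw [mul_div_cancel_right₀ _ hb.ne']
    exact (hasDerivAt_of_subgradient hsub hf.continuousAt).sub hexp
  have hGc : Continuous G := continuous_iff_continuousAt.2 fun y => (hG y).continuousAt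
  have hGx : G x ≤ G 0 := by
    rcases le_total 0 x with hx | hx
    · refine antitoneOn_of_deriv_nonpos (convex_Icc 0 x) hGc.continuousOn
        (fun y _ => (hG y).differentiableAt.differentiableWithinAt) (fun y hy => ?_)
        ⟨le_rfl, hx⟩ ⟨hx, le_rfl⟩ hx
      rw [interior_Icc] at hy
      rw [(hG y).deriv]
      simpa using hgrowth 0 y hy.1.le
    · refine monotoneOn_of_deriv_nonneg (convex_Icc x 0) hGc.continuousOn
        (fun y _ => (hG y).differentiableAt.differentiableWithinAt) (fun y hy => ?_)
        ⟨le_rfl, hx⟩ ⟨hx, le_rfl⟩ hx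
      rw [interior_Icc] at hy
      rw [(hG y).deriv, sub_nonneg]
      calc exp (b * y) * f 0 ≤ exp (b * y) * (exp (b * (0 - y)) * f y) := by
            gcongr; exact hgrowth y 0 hy.2.le
        _ = f y := by rw [← mul_assoc, ← exp_add]; simp
  simp only [G, mul_zero, exp_zero, sub_self, zero_div, zero_mul, sub_zero] at hGx
  linarith

lemma sq_mul_integral_exp_eq (x : ℝ) :
    x ^ 2 * ∫ u in (0 : ℝ)..1, (1 - u) * exp (u * x) = exp x - 1 - x := by
  have hderiv : ∀ u ∈ uIcc (0 : ℝ) 1, HasDerivAt (fun u => (x * (1 - u) + 1) * exp (u * x))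
      (x ^ 2 * ((1 - u) * exp (u * x))) u := by
    intro u _
    have hlin : HasDerivAt (fun u : ℝ => x * (1 - u) + 1) (-x) u := by
      simpa using (((hasDerivAt_id u).const_sub 1).const_mul x).add_const 1
    have hexp : HasDerivAt (fun u : ℝ => u * x) x u := by
      simpa using (hasDerivAt_id u).mul_const x
    exact (hlin.mul hexp.exp).congr_deriv (by ring)
  rw [← intervalIntegral.integral_const_mul, intervalIntegral.integral_eq_sub_of_hasDerivAt hderiv
    (Continuous.intervalIntegrable (by fun_prop) _ _)]
  simp only [sub_self, mul_zero, zero_add, one_mul, sub_zero, zero_mul, exp_zero, mul_one]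
  ring

lemma exp_le_one_add_add_sq_mul {x R : ℝ} (hR : 0 < R) (hx : x ≤ R) :
    exp x ≤ 1 + x + x ^ 2 * ((exp R - 1 - R) / R ^ 2) := by
  have hint : ∫ u in (0 : ℝ)..1, (1 - u) * exp (u * x) ≤
      ∫ u in (0 : ℝ)..1, (1 - u) * exp (u * R) := by
    refine intervalIntegral.integral_mono_on zero_le_one
      (Continuous.intervalIntegrable (by fun_prop) _ _)
      (Continuous.intervalIntegrable (by fun_prop) _ _) fun u hu => ?_
    have hu0 := hu.1
    have hu1 := sub_nonneg.2 hu.2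
    gcongr
  rw [← sq_mul_integral_exp_eq R, mul_div_cancel_left₀ _ (by positivity)]
  linarith [sq_mul_integral_exp_eq x, mul_le_mul_of_nonneg_left hint (sq_nonneg x)]

end RealAnalysis

section TraceInequalities

open NormedSpace (exp)
open scoped MatrixOrder ComplexOrder

variable {𝕜 n : Type*} [RCLike 𝕜] [Fintype n]

lemma re_trace_mul_nonneg {A B : Matrix n n 𝕜} (hA : 0 ≤ A) (hB : 0 ≤ B) :
    0 ≤ RCLike.re (A * B).trace := by
  classical
  obtain ⟨C, rfl⟩ := CStarAlgebra.nonneg_iff_eq_star_mul_self.1 hA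
  rw [mul_assoc, trace_mul_comm]
  exact (RCLike.nonneg_iff.1 (hB.posSemidef.mul_mul_conjTranspose_same C).trace_nonneg).1

lemma re_trace_mul_le_re_trace_mul {A B C : Matrix n n 𝕜} (hA : 0 ≤ A) (hBC : B ≤ C) :
    RCLike.re (A * B).trace ≤ RCLike.re (A * C).trace := by
  simpa [mul_sub] using re_trace_mul_nonneg hA (sub_nonneg.2 hBC)

lemma re_trace_mul_pos [Nonempty n] {A B : Matrix n n 𝕜} (hA : A.PosDef) (hB : B.PosDef) :
    0 < RCLike.re (A * B).trace := by
  classical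
  obtain ⟨C, hC, rfl⟩ :=
    CStarAlgebra.isStrictlyPositive_iff_eq_star_mul_self.1 hA.isStrictlyPositive
  rw [mul_assoc, trace_mul_comm]
  have hconj := hB.mul_mul_conjTranspose_same (vecMul_injective_of_isUnit hC)
  exact (RCLike.pos_iff.1 hconj.trace_pos).1

variable [DecidableEq n]

lemma cfc_exp_eq_exp {K : Matrix n n 𝕜} (hK : K.IsHermitian) :
    cfc Real.exp K = exp K := by
  let D : Matrix n n 𝕜 := diagonal (RCLike.ofReal ∘ hK.eigenvalues)
  have hD : exp D = diagonal (RCLike.ofReal ∘ Real.exp ∘ hK.eigenvalues) := by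
    rw [Matrix.exp_diagonal]
    congr 1
    ext i
    rw [Pi.coe_exp, Function.comp_apply, ← RCLike.algebraMap_eq_ofReal,
      ← NormedSpace.algebraMap_exp_comm, ← Real.exp_eq_exp_ℝ]
    rfl
  conv_rhs => rw [hK.spectral_theorem]
  rw [hK.cfc_eq, IsHermitian.cfc, Unitary.conjStarAlgAut_apply, Unitary.conjStarAlgAut_apply, ← hD]
  exact (Matrix.exp_units_conj (Unitary.toUnits hK.eigenvectorUnitary) D).symm

lemma re_trace_cfc_mul_cfc {K L : Matrix n n 𝕜} (hK : K.IsHermitian) (hL : L.IsHermitian)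
    (f g : ℝ → ℝ) :
    RCLike.re (cfc f K * cfc g L).trace = ∑ i, ∑ j,
      ‖((star hK.eigenvectorUnitary * hL.eigenvectorUnitary : unitaryGroup n 𝕜) :
        Matrix n n 𝕜) i j‖ ^ 2 * (f (hK.eigenvalues i) * g (hL.eigenvalues j)) := by
  let V : Matrix n n 𝕜 := hK.eigenvectorUnitary.1
  let W : Matrix n n 𝕜 := hL.eigenvectorUnitary.1
  let D : Matrix n n 𝕜 := diagonal (RCLike.ofReal ∘ f ∘ hK.eigenvalues)
  let E : Matrix n n 𝕜 := diagonal (RCLike.ofReal ∘ g ∘ hL.eigenvalues)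
  have hcyclic : (cfc f K * cfc g L).trace =
      (D * (star V * W) * (E * star (star V * W))).trace := by
    rw [hK.cfc_eq, hL.cfc_eq, IsHermitian.cfc, IsHermitian.cfc, Unitary.conjStarAlgAut_apply,
      Unitary.conjStarAlgAut_apply, star_mul, star_star, mul_assoc, mul_assoc, trace_mul_comm]
    simp only [D, E, V, W, mul_assoc]
  have hentry : ∀ (a b : ℝ) (z : 𝕜), RCLike.re (a * z * (b * star z)) = ‖z‖ ^ 2 * (a * b) := by
    intro a b z
    rw [mul_mul_mul_comm, RCLike.star_def, RCLike.mul_conj]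
    norm_cast
    exact mul_comm _ _
  rw [hcyclic, Matrix.trace, map_sum]
  refine Finset.sum_congr rfl fun i _ => ?_
  rw [Matrix.diag_apply, Matrix.mul_apply, map_sum]
  refine Finset.sum_congr rfl fun j _ => ?_
  rw [diagonal_mul, diagonal_mul, star_apply]
  exact hentry _ _ _

/-- Transfers an inequality in two scalars to a pair of Hermitian matrices that need not commute. -/
lemma sum_re_trace_cfc_mul_cfc_nonneg {ι : Type*} [Fintype ι] {f g : ι → ℝ → ℝ}
    (hfg : ∀ x y, 0 ≤ ∑ k, f k x * g k y) {K L : Matrix n n 𝕜}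
    (hK : K.IsHermitian) (hL : L.IsHermitian) :
    0 ≤ ∑ k, RCLike.re (cfc (f k) K * cfc (g k) L).trace := by
  simp only [re_trace_cfc_mul_cfc hK hL]
  rw [Finset.sum_comm]
  refine Finset.sum_nonneg fun i _ => ?_
  rw [Finset.sum_comm]
  refine Finset.sum_nonneg fun j _ => ?_
  rw [← Finset.mul_sum]
  exact mul_nonneg (sq_nonneg _) (hfg _ _)

lemma re_trace_exp_add_re_trace_exp_mul_sub_le {K L : Matrix n n 𝕜} (hK : K.IsHermitian)
    (hL : L.IsHermitian) :
    RCLike.re (exp K).trace + RCLike.re (exp K * (L - K)).trace ≤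
      RCLike.re (exp L).trace := by
  have hscalar : ∀ x y : ℝ, 0 ≤ ∑ k,
      ![fun _ => 1, Real.exp, fun x => x * Real.exp x - Real.exp x] k x *
      ![Real.exp, fun y => -y, fun _ => 1] k y := by
    intro x y
    simp only [Fin.sum_univ_three, Matrix.cons_val]
    have := mul_le_mul_of_nonneg_left (Real.add_one_le_exp (y - x)) (Real.exp_pos x).le
    rw [← Real.exp_add, add_sub_cancel] at this
    linarith
  have key := sum_re_trace_cfc_mul_cfc_nonneg hscalar hK hL
  have hK' : IsSelfAdjoint K := hK
  have hL' : IsSelfAdjoint L := hL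
  simp only [Fin.sum_univ_three, Matrix.cons_val] at key
  rw [cfc_const_one .., cfc_const_one .., cfc_neg_id .., cfc_sub .., cfc_mul .., cfc_id' ..,
    cfc_exp_eq_exp hK, cfc_exp_eq_exp hL] at key
  simp only [mul_sub, one_mul, mul_one, mul_neg, trace_sub, trace_neg, map_sub, map_neg] at key ⊢
  rw [trace_mul_comm K] at key
  linarith

lemma trace_exp_mul_mul_comm (A C : Matrix n n 𝕜) :
    (exp A * (C * A)).trace = (exp A * (A * C)).trace := by
  have hcomm : Commute A (exp A) := (Commute.refl A).exp_right
  rw [← mul_assoc, trace_mul_comm, ← mul_assoc, hcomm.eq, mul_assoc]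

lemma re_trace_exp_sub_exp_mul_sub_le {K L : Matrix n n 𝕜} (hK : K.IsHermitian)
    (hL : L.IsHermitian) :
    RCLike.re ((exp L - exp K) * (L - K)).trace ≤
      (RCLike.re (exp K * (L - K) ^ 2).trace + RCLike.re (exp L * (L - K) ^ 2).trace) / 2 := by
  -- Twice `exp_sub_exp_mul_sub_le`, expanded into products of a function of `x` and one of `y`.
  have hscalar : ∀ x y : ℝ, 0 ≤ ∑ k,
      ![fun x => x ^ 2 * Real.exp x - 2 * (x * Real.exp x),
        fun x => 2 * Real.exp x - 2 * (x * Real.exp x), Real.exp,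
        fun x => x ^ 2 + 2 * x, fun x => -2 * x, fun _ => 1] k x *
      ![fun _ => 1, fun y => y, fun y => y ^ 2, Real.exp, fun y => y * Real.exp y,
        fun y => y ^ 2 * Real.exp y - 2 * (y * Real.exp y)] k y := by
    intro x y
    simp only [Fin.sum_univ_six, Matrix.cons_val]
    linarith [exp_sub_exp_mul_sub_le x y]
  have key := sum_re_trace_cfc_mul_cfc_nonneg hscalar hK hL
  have hcfc : ∀ {A : Matrix n n 𝕜}, A.IsHermitian →
      cfc (fun x : ℝ => x * Real.exp x) A = exp A * A ∧
      cfc (fun x : ℝ => x ^ 2 * Real.exp x) A = exp A * A ^ 2 := by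
    intro A hA
    have hA' : IsSelfAdjoint A := hA
    simp only [mul_comm _ (Real.exp _)]
    rw [cfc_mul .., cfc_mul .., cfc_id' .., cfc_pow_id .., cfc_exp_eq_exp hA]
    exact ⟨rfl, rfl⟩
  have hK' : IsSelfAdjoint K := hK
  have hL' : IsSelfAdjoint L := hL
  simp only [Fin.sum_univ_six, Matrix.cons_val] at key
  rw [cfc_const_one .., cfc_const_one .., cfc_id' .., cfc_sub .., cfc_sub .., cfc_sub ..,
    cfc_add .., cfc_const_mul .., cfc_const_mul .., cfc_const_mul .., cfc_const_mul ..,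
    cfc_const_mul .., cfc_id' .., cfc_pow_id .., cfc_pow_id .., cfc_exp_eq_exp hK,
    cfc_exp_eq_exp hL, (hcfc hK).1, (hcfc hK).2, (hcfc hL).1, (hcfc hL).2] at key
  rw [trace_mul_comm (K ^ 2 + _), trace_mul_comm (-2 • K)] at key
  simp only [sq, mul_sub, sub_mul, mul_add, one_mul, mul_one, smul_mul_assoc, mul_smul_comm,
    trace_sub, trace_add, trace_smul, map_sub, map_add, RCLike.smul_re, mul_assoc] at key ⊢
  rw [trace_exp_mul_mul_comm K L, trace_exp_mul_mul_comm L K]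
  linarith

lemma exp_nonneg_of_isHermitian {K : Matrix n n 𝕜} (hK : K.IsHermitian) : 0 ≤ exp K := by
  rw [← cfc_exp_eq_exp hK]
  exact cfc_nonneg fun x _ => (Real.exp_pos x).le

lemma mul_self_le_smul {B : Matrix n n 𝕜} {b : ℝ} (hB : 0 ≤ B) (hBb : B ≤ b • 1) :
    B * B ≤ b • B := by
  have hcomm : Commute B (b • 1 - B) :=
    ((Commute.one_right B).smul_right b).sub_right (Commute.refl B)
  simpa [mul_sub] using hcomm.mul_nonneg hB (sub_nonneg.2 hBb)

lemma continuous_matrix_exp : Continuous (exp : Matrix n n 𝕜 → Matrix n n 𝕜) :=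
  open scoped Matrix.Norms.Operator in NormedSpace.exp_continuous

lemma re_trace_exp_add_smul_mul_sub_le {K B : Matrix n n 𝕜} {b : ℝ} (hK : K.IsHermitian)
    (hB : 0 ≤ B) (hBb : B ≤ b • 1) {x y : ℝ} (hxy : x < y) :
    RCLike.re (exp (K + y • B) * B).trace - RCLike.re (exp (K + x • B) * B).trace ≤
      (RCLike.re (exp (K + x • B) * B).trace + RCLike.re (exp (K + y • B) * B).trace) / 2 *
        (b * (y - x)) := by
  have hherm : ∀ t : ℝ, (K + t • B).IsHermitian :=
    fun t => hK.add (hB.posSemidef.isHermitian.smul (IsSelfAdjoint.all t))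
  have hsq : ∀ t : ℝ, RCLike.re (exp (K + t • B) * (B * B)).trace ≤
      b * RCLike.re (exp (K + t • B) * B).trace := by
    intro t
    simpa [RCLike.smul_re] using
      re_trace_mul_le_re_trace_mul (exp_nonneg_of_isHermitian (hherm t)) (mul_self_le_smul hB hBb)
  have key := re_trace_exp_sub_exp_mul_sub_le (hherm x) (hherm y)
  rw [add_sub_add_left_eq_sub, ← sub_smul] at key
  simp only [sq, sub_mul, smul_mul_assoc, mul_smul_comm, trace_sub, trace_smul, map_sub,
    RCLike.smul_re] at key
  have hyx : 0 < y - x := sub_pos.2 hxy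
  have := mul_le_mul_of_nonneg_left (add_le_add (hsq x) (hsq y)) (sq_nonneg (y - x))
  refine le_of_mul_le_mul_left ?_ hyx
  linarith

theorem re_trace_exp_add_smul_le {K B : Matrix n n 𝕜} {b : ℝ} (hb : 0 < b) (hK : K.IsHermitian)
    (hB : 0 ≤ B) (hBb : B ≤ b • 1) (x : ℝ) :
    RCLike.re (exp (K + x • B)).trace ≤
      RCLike.re (exp K).trace + (Real.exp (b * x) - 1) / b * RCLike.re (exp K * B).trace := by
  have hherm : ∀ t : ℝ, (K + t • B).IsHermitian :=
    fun t => hK.add (hB.posSemidef.isHermitian.smul (IsSelfAdjoint.all t))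
  have hcont : Continuous fun t : ℝ => RCLike.re (exp (K + t • B) * B).trace :=
    RCLike.continuous_re.comp <| Continuous.matrix_trace <|
      (continuous_matrix_exp.comp (by fun_prop)).matrix_mul continuous_const
  have hsub : ∀ y z : ℝ, RCLike.re (exp (K + y • B)).trace +
      RCLike.re (exp (K + y • B) * B).trace * (z - y) ≤ RCLike.re (exp (K + z • B)).trace := by
    intro y z
    have hklein := re_trace_exp_add_re_trace_exp_mul_sub_le (hherm y) (hherm z)
    rwa [add_sub_add_left_eq_sub, ← sub_smul, mul_smul_comm, trace_smul, RCLike.smul_re,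
      mul_comm] at hklein
  simpa using le_add_of_subgradient_of_exp_growth hb hcont hsub
    (fun y z hyz => le_exp_mul_of_sub_le_average hcont
      (fun _ _ => re_trace_exp_add_smul_mul_sub_le hK hB hBb) hyz) x

lemma re_trace_exp_le_re_trace_exp {K L : Matrix n n 𝕜} (hK : K.IsHermitian) (hL : L.IsHermitian)
    (hKL : K ≤ L) : RCLike.re (exp K).trace ≤ RCLike.re (exp L).trace := by
  have hslope := re_trace_mul_nonneg (exp_nonneg_of_isHermitian hK) (sub_nonneg.2 hKL)
  linarith [re_trace_exp_add_re_trace_exp_mul_sub_le hK hL]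

lemma re_trace_exp_smul_one (c : ℝ) :
    RCLike.re (exp (c • (1 : Matrix n n 𝕜))).trace = Fintype.card n * Real.exp c := by
  rw [← cfc_exp_eq_exp (isHermitian_one.smul (IsSelfAdjoint.all c)),
    ← Algebra.algebraMap_eq_smul_one, cfc_algebraMap, Algebra.algebraMap_eq_smul_one,
    trace_smul, trace_one, RCLike.smul_re]
  simp [mul_comm]

lemma le_re_trace_smul_one {A : Matrix n n 𝕜} (hA : 0 ≤ A) : A ≤ RCLike.re A.trace • 1 := by
  have hA' := hA.posSemidef
  rw [← Algebra.algebraMap_eq_smul_one, le_algebraMap_iff_spectrum_le hA'.isHermitian,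
    hA'.isHermitian.spectrum_real_eq_range_eigenvalues]
  rintro _ ⟨i, rfl⟩
  rw [hA'.isHermitian.trace_eq_sum_eigenvalues, ← RCLike.ofReal_sum, RCLike.ofReal_re]
  exact Finset.single_le_sum (fun j _ => hA'.eigenvalues_nonneg j) (Finset.mem_univ i)

lemma posDef_sub_of_re_trace_exp_lt {H : Matrix n n 𝕜} {t : ℝ} (hH : H.IsHermitian)
    (hlt : RCLike.re (exp H).trace < Real.exp t) : (t • 1 - H).PosDef := by
  have hH' : IsSelfAdjoint H := hH
  have hle : cfc Real.exp H ≤ algebraMap ℝ _ (RCLike.re (exp H).trace) := by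
    rw [cfc_exp_eq_exp hH, Algebra.algebraMap_eq_smul_one]
    exact le_re_trace_smul_one (exp_nonneg_of_isHermitian hH)
  have hcfc : t • 1 - H = cfc (fun x : ℝ => t - x) H := by
    rw [cfc_sub .., cfc_const .., cfc_id' .., Algebra.algebraMap_eq_smul_one]
  rw [← isStrictlyPositive_iff_posDef, hcfc, cfc_isStrictlyPositive_iff ..]
  intro x hx
  rw [sub_pos, ← Real.exp_lt_exp]
  exact (cfc_le_algebraMap_iff _ _ _ |>.1 hle x hx).trans_lt hlt

lemma re_trace_inv_lt [Nonempty n] {M : Matrix n n 𝕜} {ν : ℝ} (hν : 0 < ν)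
    (hM : (M - ν • 1).PosDef) : RCLike.re M⁻¹.trace < Fintype.card n / ν := by
  have hMpos : M.PosDef := by
    simpa using hM.add (PosDef.one.smul hν)
  have hpos := re_trace_mul_pos hMpos.inv hM
  rw [mul_sub, nonsing_inv_mul _ ((isUnit_iff_isUnit_det _).1 hMpos.isUnit), mul_smul_comm,
    mul_one, trace_sub, trace_one, trace_smul, map_sub, RCLike.smul_re, RCLike.natCast_re] at hpos
  rw [lt_div_iff₀ hν]
  linarith

end TraceInequalities

section Probability

variable {Ω : Type*} [MeasurableSpace Ω] {P : Measure Ω}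

lemma integrable_comp_of_ae_mem_isCompact [IsFiniteMeasure P] {X F : Type*} [TopologicalSpace X]
    [MeasurableSpace X] [OpensMeasurableSpace X] [NormedAddCommGroup F]
    [SecondCountableTopologyEither X F] {f : X → F} {ξ : Ω → X} {S : Set X} (hf : Continuous f)
    (hξ : Measurable ξ) (hS : IsCompact S) (hξS : ∀ᵐ ω ∂P, ξ ω ∈ S) :
    Integrable (fun ω => f (ξ ω)) P := by
  obtain ⟨C, hC⟩ := hS.exists_bound_of_continuousOn hf.continuousOn
  exact Integrable.of_bound (hf.stronglyMeasurable.comp_measurable hξ).aestronglyMeasurable C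
    (hξS.mono fun ω => hC (ξ ω))

lemma integral_exp_le_of_abs_le [IsProbabilityMeasure P] {X : Ω → ℝ} {R v : ℝ}
    (hX : Measurable X) (hR : 0 < R) (hbdd : ∀ᵐ ω ∂P, |X ω| ≤ R)
    (hmean : ∫ ω, X ω ∂P = 0) (hvar : ∫ ω, X ω ^ 2 ∂P ≤ v) :
    ∫ ω, Real.exp (X ω) ∂P ≤ 1 + v * ((Real.exp R - 1 - R) / R ^ 2) := by
  have hint : ∀ {f : ℝ → ℝ}, Continuous f → Integrable (fun ω => f (X ω)) P := fun hf =>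
    integrable_comp_of_ae_mem_isCompact hf hX isCompact_Icc (hbdd.mono fun ω => abs_le.1)
  have hc : 0 ≤ (Real.exp R - 1 - R) / R ^ 2 :=
    div_nonneg (by linarith [Real.add_one_le_exp R]) (sq_nonneg R)
  calc ∫ ω, Real.exp (X ω) ∂P
      ≤ ∫ ω, 1 + X ω + X ω ^ 2 * ((Real.exp R - 1 - R) / R ^ 2) ∂P :=
        integral_mono_ae (hint Real.continuous_exp)
          (hint (f := fun x => 1 + x + x ^ 2 * ((Real.exp R - 1 - R) / R ^ 2)) (by fun_prop))
          (hbdd.mono fun ω hω => exp_le_one_add_add_sq_mul hR ((le_abs_self _).trans hω))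
    _ = 1 + (∫ ω, X ω ^ 2 ∂P) * ((Real.exp R - 1 - R) / R ^ 2) := by
        rw [integral_add (hint (f := fun x => 1 + x) (by fun_prop))
            (hint (f := fun x => x ^ 2 * _) (by fun_prop)),
          integral_add (integrable_const 1) (hint continuous_id'), integral_mul_const, hmean]
        simp
    _ ≤ 1 + v * ((Real.exp R - 1 - R) / R ^ 2) := by gcongr

lemma iIndepFun_curry {ι κ 𝓧 : Type*} [MeasurableSpace 𝓧] {X : ι × κ → Ω → 𝓧}
    (hX : ∀ p, Measurable (X p)) (hindep : iIndepFun X P) :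
    iIndepFun (fun i ω j => X (i, j) ω) P := by
  have := hindep.isProbabilityMeasure
  have (p : ι × κ) : IsProbabilityMeasure (P.map (X p)) :=
    Measure.isProbabilityMeasure_map (hX p).aemeasurable
  have hrow (i : ι) : P.map (fun ω j => X (i, j) ω) =
      Measure.infinitePi fun j => P.map (X (i, j)) :=
    (iIndepFun_iff_map_fun_eq_infinitePi_map (fun j => hX (i, j))).1
      (hindep.precomp (Prod.mk_right_injective i))
  rw [iIndepFun_iff_map_fun_eq_infinitePi_map (by fun_prop)]
  simp only [hrow]
  rw [← Measure.infinitePi_map_curry (fun i j => P.map (X (i, j))),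
    ← (iIndepFun_iff_map_fun_eq_infinitePi_map hX).1 hindep,
    Measure.map_map (by fun_prop) (by fun_prop)]
  rfl

lemma integral_le_integral_of_le_add_mul {F U V T φ : Ω → ℝ} {c : ℝ}
    (hF : Integrable F P) (hU : Integrable U P) (hV : Integrable V P) (hT : Integrable T P)
    (hφ : Integrable φ P) (hindep : IndepFun φ T P) (hT_nonneg : 0 ≤ T) (hφc : ∫ ω, φ ω ∂P ≤ c)
    (hFU : ∀ ω, F ω ≤ U ω + φ ω * T ω) (hUV : ∀ ω, U ω + c * T ω ≤ V ω) :
    ∫ ω, F ω ∂P ≤ ∫ ω, V ω ∂P := by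
  have hφT : Integrable (fun ω => φ ω * T ω) P := hindep.integrable_mul hφ hT
  have hT_integral : 0 ≤ ∫ ω, T ω ∂P := integral_nonneg hT_nonneg
  calc ∫ ω, F ω ∂P ≤ ∫ ω, U ω + φ ω * T ω ∂P := integral_mono hF (hU.add hφT) hFU
    _ = ∫ ω, U ω ∂P + (∫ ω, φ ω ∂P) * ∫ ω, T ω ∂P := by
        rw [integral_add hU hφT, hindep.integral_fun_mul_eq_mul_integral hφ.1 hT.1]
    _ ≤ ∫ ω, U ω ∂P + c * ∫ ω, T ω ∂P := by gcongr
    _ = ∫ ω, U ω + c * T ω ∂P := by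
        rw [integral_add hU (hT.const_mul c), integral_const_mul]
    _ ≤ ∫ ω, V ω ∂P := integral_mono (hU.add (hT.const_mul c)) hV hUV

lemma ofReal_one_sub_le_measure [IsProbabilityMeasure P] {A : Set Ω} {x : ℝ}
    (hA : P.real Aᶜ ≤ x) :
    ENNReal.ofReal (1 - x) ≤ P A := by
  rw [← ofReal_measureReal]
  have hcover : P.real (A ∪ Aᶜ) ≤ P.real A + P.real Aᶜ := measureReal_union_le A Aᶜ
  rw [Set.union_compl_self, probReal_univ] at hcover
  exact ENNReal.ofReal_le_ofReal (by linarith)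

end Probability

section MatrixConcentration

open NormedSpace (exp)
open scoped MatrixOrder ComplexOrder

variable {𝕜 n Ω : Type*} [RCLike 𝕜] [Fintype n] [DecidableEq n] [MeasurableSpace Ω]
  {P : Measure Ω}

lemma integral_re_trace_exp_add_smul_le [MeasurableSpace (Matrix n n 𝕜)]
    [BorelSpace (Matrix n n 𝕜)] [IsProbabilityMeasure P] {H : Ω → Matrix n n 𝕜} {ξ : Ω → ℝ}
    {S : Set (Matrix n n 𝕜)} {R : ℝ} (hH : Measurable H) (hξ : Measurable ξ)
    (hherm : ∀ ω, (H ω).IsHermitian) (hS : IsCompact S) (hHS : ∀ᵐ ω ∂P, H ω ∈ S)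
    (hbdd : ∀ᵐ ω ∂P, |ξ ω| ≤ R) (hindep : IndepFun H ξ P)
    {B : Matrix n n 𝕜} {b c : ℝ} (hb : 0 < b) (hB : 0 ≤ B) (hBb : B ≤ b • 1)
    (hmgf : ∫ ω, Real.exp (b * ξ ω) ∂P ≤ 1 + b * c) :
    ∫ ω, RCLike.re (exp (H ω + ξ ω • B)).trace ∂P ≤
      ∫ ω, RCLike.re (exp (H ω + c • B)).trace ∂P := by
  have hφ : Continuous fun x : ℝ => (Real.exp (b * x) - 1) / b := by fun_prop
  have htr : Continuous fun A : Matrix n n 𝕜 => RCLike.re (exp A).trace :=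
    RCLike.continuous_re.comp continuous_matrix_exp.matrix_trace
  have hτ : Continuous fun A : Matrix n n 𝕜 => RCLike.re (exp A * B).trace :=
    RCLike.continuous_re.comp (continuous_matrix_exp.matrix_mul continuous_const).matrix_trace
  have hpair : ∀ {f : Matrix n n 𝕜 × ℝ → ℝ}, Continuous f →
      Integrable (fun ω => f (H ω, ξ ω)) P := fun hf =>
    integrable_comp_of_ae_mem_isCompact hf (hH.prodMk hξ)
      (hS.prod isCompact_Icc) (hHS.and (hbdd.mono fun ω => abs_le.1))
  have hH_int : ∀ {f : Matrix n n 𝕜 → ℝ}, Continuous f → Integrable (fun ω => f (H ω)) P :=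
    fun hf => hpair (hf.comp continuous_fst)
  have hmean : ∫ ω, (Real.exp (b * ξ ω) - 1) / b ∂P ≤ c := by
    rw [integral_div, integral_sub (hpair (f := fun q => Real.exp (b * q.2)) (by fun_prop))
      (integrable_const 1), div_le_iff₀ hb]
    simp only [integral_const, probReal_univ, one_smul]
    linarith
  have hconvex : ∀ ω, RCLike.re (exp (H ω)).trace + c * RCLike.re (exp (H ω) * B).trace ≤
      RCLike.re (exp (H ω + c • B)).trace := fun ω => by
    simpa [RCLike.smul_re] using re_trace_exp_add_re_trace_exp_mul_sub_le (hherm ω)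
      ((hherm ω).add (hB.posSemidef.isHermitian.smul (IsSelfAdjoint.all c)))
  have hF : Integrable (fun ω => RCLike.re (exp (H ω + ξ ω • B)).trace) P :=
    hpair (f := fun q => RCLike.re (exp (q.1 + q.2 • B)).trace) (htr.comp (by fun_prop))
  have hV : Integrable (fun ω => RCLike.re (exp (H ω + c • B)).trace) P :=
    hH_int (f := fun A => RCLike.re (exp (A + c • B)).trace) (htr.comp (by fun_prop))
  have hφξ : Integrable (fun ω => (Real.exp (b * ξ ω) - 1) / b) P :=
    hpair (f := fun q => (Real.exp (b * q.2) - 1) / b) (by fun_prop)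
  exact integral_le_integral_of_le_add_mul hF (hH_int htr) hV (hH_int hτ) hφξ
    (hindep.symm.comp hφ.measurable hτ.measurable)
    (fun ω => re_trace_mul_nonneg (exp_nonneg_of_isHermitian (hherm ω)) hB) hmean
    (fun ω => re_trace_exp_add_smul_le hb (hherm ω) hB hBb (ξ ω)) hconvex

theorem integral_re_trace_exp_sum_smul_le {ι : Type*} [IsProbabilityMeasure P]
    {ξ : ι → Ω → ℝ} {B : ι → Matrix n n 𝕜} {b : ℝ} {R c : ι → ℝ} (hb : 0 < b)
    (hξ : ∀ k, Measurable (ξ k)) (hindep : iIndepFun ξ P) (hbdd : ∀ k, ∀ᵐ ω ∂P, |ξ k ω| ≤ R k)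
    (hB : ∀ k, 0 ≤ B k) (hBb : ∀ k, B k ≤ b • 1)
    (hmgf : ∀ k, ∫ ω, Real.exp (b * ξ k ω) ∂P ≤ 1 + b * c k)
    (A : Finset ι) {H₀ : Matrix n n 𝕜} (hH₀ : H₀.IsHermitian) :
    ∫ ω, RCLike.re (exp (H₀ + ∑ k ∈ A, ξ k ω • B k)).trace ∂P ≤
      RCLike.re (exp (H₀ + ∑ k ∈ A, c k • B k)).trace := by
  classical
  have hsmul : ∀ (x : ℝ) k, (x • B k).IsHermitian :=
    fun x k => (hB k).posSemidef.isHermitian.smul (IsSelfAdjoint.all x)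
  induction A using Finset.induction_on generalizing H₀ with
  | empty => simp
  | insert k A hk ih =>
    let : MeasurableSpace (Matrix n n 𝕜) := borel _
    have : BorelSpace (Matrix n n 𝕜) := ⟨rfl⟩
    let g : (A → ℝ) → Matrix n n 𝕜 := fun x => H₀ + ∑ j : A, x j • B j
    have hg : Continuous g := by fun_prop
    have hgξ : ∀ ω, g (fun j => ξ j ω) = H₀ + ∑ j ∈ A, ξ j ω • B j := fun ω => by
      simp only [g, Finset.univ_eq_attach, Finset.sum_attach A fun j => ξ j ω • B j]
    have hgS : ∀ᵐ ω ∂P, g (fun j => ξ j ω) ∈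
        g '' Set.univ.pi fun j : A => Set.Icc (-R j) (R j) := by
      filter_upwards [ae_all_iff.2 fun j : A => hbdd j] with ω hω
      exact Set.mem_image_of_mem g fun j _ => abs_le.1 (hω j)
    have hg_indep : IndepFun (fun ω => g fun j => ξ j ω) (ξ k) P :=
      (hindep.indepFun_finset A {k} (Finset.disjoint_singleton_right.2 hk) hξ).comp hg.measurable
        (measurable_pi_apply (⟨k, Finset.mem_singleton_self k⟩ : ({k} : Finset ι)))
    have hstep := integral_re_trace_exp_add_smul_le (hg.measurable.comp (by fun_prop)) (hξ k)
      (fun ω => hH₀.add (isSelfAdjoint_sum _ fun j _ => hsmul _ _))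
      ((isCompact_univ_pi fun j => isCompact_Icc).image hg) hgS (hbdd k) hg_indep
      hb (hB k) (hBb k) (hmgf k)
    simp only [Function.comp_apply, hgξ] at hstep
    simp only [Finset.sum_insert hk, add_comm (_ • B k), ← add_assoc] at hstep ⊢
    refine hstep.trans ?_
    simpa only [add_right_comm] using ih (hH₀.add (hsmul (c k) k))

lemma integrable_re_trace_exp_sum_smul {ι : Type*} [Fintype ι] [IsFiniteMeasure P]
    {ξ : ι → Ω → ℝ} {R : ι → ℝ} (hξ : ∀ k, Measurable (ξ k))
    (hbdd : ∀ k, ∀ᵐ ω ∂P, |ξ k ω| ≤ R k) (B : ι → Matrix n n 𝕜) :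
    Integrable (fun ω => RCLike.re (exp (∑ k, ξ k ω • B k)).trace) P := by
  have hcont : Continuous fun x : ι → ℝ => RCLike.re (exp (∑ k, x k • B k)).trace :=
    RCLike.continuous_re.comp (continuous_matrix_exp.comp (by fun_prop)).matrix_trace
  refine integrable_comp_of_ae_mem_isCompact (f := fun x : ι → ℝ =>
    RCLike.re (exp (∑ k, x k • B k)).trace) hcont (measurable_pi_lambda _ hξ)
    (isCompact_univ_pi fun k => isCompact_Icc (a := -R k) (b := R k)) ?_
  filter_upwards [ae_all_iff.2 hbdd] with ω hω k _
  exact abs_le.1 (hω k)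

lemma integral_re_trace_exp_sum_smul_le_card_mul_exp {ι : Type*} [Fintype ι]
    [IsProbabilityMeasure P] {ξ : ι → Ω → ℝ} {B : ι → Matrix n n 𝕜} {b R v : ℝ} (hb : 0 < b)
    (hR : 0 < R) (hv : 0 ≤ v) (hξ : ∀ k, Measurable (ξ k)) (hindep : iIndepFun ξ P)
    (hbdd : ∀ k, ∀ᵐ ω ∂P, |ξ k ω| ≤ R) (hmean : ∀ k, ∫ ω, ξ k ω ∂P = 0)
    (hvar : ∀ k, ∫ ω, ξ k ω ^ 2 ∂P ≤ v) (hB : ∀ k, 0 ≤ B k) (hBb : ∀ k, B k ≤ b • 1)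
    (hsum : ∑ k, B k ≤ 1) :
    ∫ ω, RCLike.re (exp (∑ k, ξ k ω • B k)).trace ∂P ≤
      Fintype.card n * Real.exp (v / (b * R ^ 2) * (Real.exp (b * R) - 1 - b * R)) := by
  let c := v / (b * R ^ 2) * (Real.exp (b * R) - 1 - b * R)
  have hc : 0 ≤ c :=
    mul_nonneg (by positivity) (by linarith [Real.add_one_le_exp (b * R)])
  have hmgf : ∀ k, ∫ ω, Real.exp (b * ξ k ω) ∂P ≤ 1 + b * c := by
    intro k
    have hvar' : ∫ ω, (b * ξ k ω) ^ 2 ∂P ≤ b ^ 2 * v := by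
      simp only [mul_pow, integral_const_mul]
      gcongr
      exact hvar k
    refine (integral_exp_le_of_abs_le ((hξ k).const_mul b) (mul_pos hb hR) ?_ ?_ hvar').trans_eq ?_
    · filter_upwards [hbdd k] with ω hω
      rw [abs_mul, abs_of_pos hb]
      gcongr
    · rw [integral_const_mul, hmean, mul_zero]
    · simp only [c]
      field_simp
  have hsum_herm : (∑ k, B k).IsHermitian :=
    isSelfAdjoint_sum _ fun k _ => (hB k).posSemidef.isHermitian
  calc ∫ ω, RCLike.re (exp (∑ k, ξ k ω • B k)).trace ∂P
      ≤ RCLike.re (exp (c • ∑ k, B k)).trace := by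
        simpa [Finset.smul_sum] using integral_re_trace_exp_sum_smul_le hb hξ hindep hbdd hB hBb
          hmgf Finset.univ isHermitian_zero
    _ ≤ RCLike.re (exp (c • (1 : Matrix n n 𝕜))).trace :=
        re_trace_exp_le_re_trace_exp (hsum_herm.smul (IsSelfAdjoint.all c))
          (isHermitian_one.smul (IsSelfAdjoint.all c)) (smul_le_smul_of_nonneg_left hsum hc)
    _ = Fintype.card n * Real.exp c := re_trace_exp_smul_one c

lemma measureReal_not_posDef_sub_le [IsFiniteMeasure P] {H : Ω → Matrix n n 𝕜} {θ : ℝ}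
    (hθ : 0 < θ) (hH : ∀ ω, (H ω).IsHermitian)
    (hint : Integrable (fun ω => RCLike.re (exp (θ • H ω)).trace) P) (r : ℝ) :
    P.real {ω | ¬(r • 1 - H ω).PosDef} ≤
      (∫ ω, RCLike.re (exp (θ • H ω)).trace ∂P) / Real.exp (θ * r) := by
  have hherm : ∀ ω, (θ • H ω).IsHermitian := fun ω => (hH ω).smul (IsSelfAdjoint.all θ)
  have hnonneg : ∀ ω, 0 ≤ RCLike.re (exp (θ • H ω)).trace := fun ω => by
    simpa using re_trace_mul_nonneg (exp_nonneg_of_isHermitian (hherm ω)) zero_le_one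
  have hsubset : {ω | ¬(r • 1 - H ω).PosDef} ⊆
      {ω | Real.exp (θ * r) ≤ RCLike.re (exp (θ • H ω)).trace} := by
    intro ω hω
    by_contra hlt
    have hscaled := (posDef_sub_of_re_trace_exp_lt (hherm ω) (not_le.1 hlt)).smul (inv_pos.2 hθ)
    rw [smul_sub, smul_smul, inv_mul_cancel_left₀ hθ.ne', inv_smul_smul₀ hθ.ne'] at hscaled
    exact hω hscaled
  rw [le_div_iff₀' (Real.exp_pos _)]
  exact (mul_le_mul_of_nonneg_left (measureReal_mono hsubset) (Real.exp_pos _).le).trans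
    (mul_meas_ge_le_integral_of_nonneg (.of_forall hnonneg) hint _)

lemma measureReal_not_posDef_le_card_mul_exp {ι : Type*} [Fintype ι] [IsProbabilityMeasure P]
    {ξ : ι → Ω → ℝ} {B : ι → Matrix n n 𝕜} {b R v θ : ℝ} (hb : 0 < b) (hR : 0 < R) (hv : 0 ≤ v)
    (hθ : 0 < θ) (hξ : ∀ k, Measurable (ξ k)) (hindep : iIndepFun ξ P)
    (hbdd : ∀ k, ∀ᵐ ω ∂P, |ξ k ω| ≤ R) (hmean : ∀ k, ∫ ω, ξ k ω ∂P = 0)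
    (hvar : ∀ k, ∫ ω, ξ k ω ^ 2 ∂P ≤ v) (hB : ∀ k, 0 ≤ B k) (hBb : ∀ k, B k ≤ b • 1)
    (hsum : ∑ k, B k ≤ 1) (r : ℝ) :
    P.real {ω | ¬(r • 1 - ∑ k, ξ k ω • B k).PosDef} ≤ Fintype.card n *
      Real.exp (v / (b * R ^ 2) * (Real.exp (θ * (b * R)) - 1 - θ * (b * R)) - θ * r) := by
  have hθξ : ∀ k, Measurable fun ω => θ * ξ k ω := fun k => (hξ k).const_mul θ
  have hθbdd : ∀ k, ∀ᵐ ω ∂P, |θ * ξ k ω| ≤ θ * R := fun k => (hbdd k).mono fun ω hω => by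
    rw [abs_mul, abs_of_pos hθ]
    gcongr
  have hθmean : ∀ k, ∫ ω, θ * ξ k ω ∂P = 0 := fun k => by
    rw [integral_const_mul, hmean, mul_zero]
  have hθvar : ∀ k, ∫ ω, (θ * ξ k ω) ^ 2 ∂P ≤ θ ^ 2 * v := fun k => by
    simp only [mul_pow, integral_const_mul]
    gcongr
    exact hvar k
  have hmoment := integral_re_trace_exp_sum_smul_le_card_mul_exp hb (mul_pos hθ hR)
    (by positivity) hθξ (hindep.comp _ fun _ => measurable_const_mul θ) hθbdd hθmean hθvar
    hB hBb hsum
  have hherm : ∀ ω, (∑ k, ξ k ω • B k).IsHermitian := fun ω =>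
    isSelfAdjoint_sum _ fun k _ => (hB k).posSemidef.isHermitian.smul (IsSelfAdjoint.all _)
  have hlaplace := measureReal_not_posDef_sub_le (P := P) hθ hherm
    (by simpa only [Finset.smul_sum, smul_smul] using
      integrable_re_trace_exp_sum_smul hθξ hθbdd B) r
  simp only [Finset.smul_sum, smul_smul] at hlaplace
  refine hlaplace.trans ?_
  rw [Real.exp_sub, ← mul_div_assoc]
  gcongr
  rwa [mul_left_comm b θ R, mul_pow, mul_left_comm b, mul_div_mul_left _ _ (by positivity)]
    at hmoment

theorem matrix_bennett {ι : Type*} [Fintype ι] [IsProbabilityMeasure P]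
    {ξ : ι → Ω → ℝ} {B : ι → Matrix n n 𝕜} {b R v r : ℝ} (hb : 0 < b) (hR : 0 < R) (hv : 0 < v)
    (hr : 0 < r) (hξ : ∀ k, Measurable (ξ k)) (hindep : iIndepFun ξ P)
    (hbdd : ∀ k, ∀ᵐ ω ∂P, |ξ k ω| ≤ R) (hmean : ∀ k, ∫ ω, ξ k ω ∂P = 0)
    (hvar : ∀ k, ∫ ω, ξ k ω ^ 2 ∂P ≤ v) (hB : ∀ k, 0 ≤ B k) (hBb : ∀ k, B k ≤ b • 1)
    (hsum : ∑ k, B k ≤ 1) :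
    P.real {ω | ¬(r • 1 - ∑ k, ξ k ω • B k).PosDef} ≤
      Fintype.card n * Real.exp (-(v / (b * R ^ 2)) * hfun (R * r / v)) := by
  have hlog : 0 < Real.log (1 + R * r / v) :=
    Real.log_pos (lt_add_of_pos_right 1 (by positivity))
  have hθ : 0 < Real.log (1 + R * r / v) / (b * R) := by positivity
  refine (measureReal_not_posDef_le_card_mul_exp hb hR hv.le hθ hξ hindep hbdd hmean hvar
    hB hBb hsum r).trans_eq ?_
  rw [div_mul_cancel₀ _ (by positivity), Real.exp_log (by positivity), hfun]
  congr 2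
  field_simp
  ring

end MatrixConcentration

section BlockModel

open scoped MatrixOrder ComplexOrder

variable {s nT Q : ℕ}

/-- The Gram matrix `∑ₜ uᵢ uᵢ†` of the rows of `Us` in block `k`, where `i = (k−1)Q + t`. -/
noncomputable def blockGram (Us : Matrix (Fin (nT * Q)) (Fin s) ℂ) (k : Fin nT) :
    Matrix (Fin s) (Fin s) ℂ :=
  (Us.submatrix (blockIdx nT Q k) id)ᴴ * Us.submatrix (blockIdx nT Q k) id

/-- The squared Frobenius norm `∑ₜ ‖uᵢ‖²` of the rows of `Us` in block `k`; the signal power `S_k`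
of the model is `P_x / s` times it. -/
noncomputable def blockNormSq (Us : Matrix (Fin (nT * Q)) (Fin s) ℂ) (k : Fin nT) : ℝ :=
  ∑ t, rowNormSq Us (blockIdx nT Q k t)

lemma blockOf_blockIdx (k : Fin nT) (t : Fin Q) : blockOf nT Q (blockIdx nT Q k t) = k := by
  simp [blockOf, blockIdx]

lemma sum_eq_sum_blockIdx {M : Type*} [AddCommMonoid M] (f : Fin (nT * Q) → M) :
    ∑ i, f i = ∑ k, ∑ t, f (blockIdx nT Q k t) := by
  rw [← finProdFinEquiv.sum_comp, Fintype.sum_prod_type]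
  rfl

variable {Us : Matrix (Fin (nT * Q)) (Fin s) ℂ}

lemma blockGram_nonneg (k : Fin nT) : 0 ≤ blockGram Us k :=
  (posSemidef_conjTranspose_mul_self _).nonneg

lemma conjTranspose_mul_diagonal_blockOf_mul (q : Fin nT → ℝ) :
    Usᴴ * diagonal (fun i => ((q (blockOf nT Q i) : ℝ) : ℂ)) * Us = ∑ k, q k • blockGram Us k := by
  ext a b
  rw [mul_apply, sum_eq_sum_blockIdx, Matrix.sum_apply]
  refine Finset.sum_congr rfl fun k _ => ?_
  rw [Matrix.smul_apply, blockGram, mul_apply, Finset.smul_sum]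
  refine Finset.sum_congr rfl fun t _ => ?_
  rw [mul_diagonal, blockOf_blockIdx, Complex.real_smul, mul_assoc, mul_left_comm]
  rfl

lemma sum_blockGram : ∑ k, blockGram Us k = Usᴴ * Us := by
  simpa using (conjTranspose_mul_diagonal_blockOf_mul (Us := Us) fun _ => 1).symm

lemma re_trace_blockGram (k : Fin nT) : RCLike.re (blockGram Us k).trace = blockNormSq Us k := by
  simp only [blockGram, blockNormSq, rowNormSq, Matrix.trace, diag_apply, mul_apply,
    conjTranspose_apply, submatrix_apply, id, map_sum]
  rw [Finset.sum_comm]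
  refine Finset.sum_congr rfl fun t _ => Finset.sum_congr rfl fun j _ => ?_
  rw [RCLike.star_def, RCLike.conj_mul]
  norm_cast

lemma mul_le_blockNormSq {ηL : ℝ} (hηL : ∀ i, ηL ≤ rowNormSq Us i) (k : Fin nT) :
    Q * ηL ≤ blockNormSq Us k := by
  simpa [blockNormSq] using
    Finset.card_nsmul_le_sum Finset.univ _ ηL fun t _ => hηL (blockIdx nT Q k t)

lemma blockNormSq_le_mul {ηU : ℝ} (hηU : ∀ i, rowNormSq Us i ≤ ηU) (k : Fin nT) :
    blockNormSq Us k ≤ Q * ηU := by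
  simpa [blockNormSq] using
    Finset.sum_le_card_nsmul Finset.univ _ ηU fun t _ => hηU (blockIdx nT Q k t)

lemma blockGram_le_min_smul_one (hUs : Usᴴ * Us = 1) {ηU : ℝ} (hηU : ∀ i, rowNormSq Us i ≤ ηU)
    (k : Fin nT) : blockGram Us k ≤ min (Q * ηU) 1 • 1 := by
  rcases min_choice (Q * ηU) 1 with hmin | hmin <;> rw [hmin]
  · refine (le_re_trace_smul_one (blockGram_nonneg k)).trans ?_
    rw [re_trace_blockGram]
    exact smul_le_smul_of_nonneg_right (blockNormSq_le_mul hηU k) zero_le_one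
  · rw [one_smul, ← hUs, ← sum_blockGram]
    exact Finset.single_le_sum (fun j _ => blockGram_nonneg j) (Finset.mem_univ k)

lemma inv_smul_one_le_sum_smul_blockGram (hUs : Usᴴ * Us = 1) {ηU : ℝ} (hηU_pos : 0 < ηU)
    (hηU : ∀ i, rowNormSq Us i ≤ ηU) (hpos : ∀ k, 0 < blockNormSq Us k) :
    (1 / ηU) • 1 ≤ ∑ k, (Q / blockNormSq Us k) • blockGram Us k := by
  rw [← hUs, ← sum_blockGram, Finset.smul_sum]
  refine Finset.sum_le_sum fun k _ => smul_le_smul_of_nonneg_right ?_ (blockGram_nonneg k)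
  rw [div_le_div_iff₀ hηU_pos (hpos k), one_mul]
  exact blockNormSq_le_mul hηU k

lemma posDef_information_sub (hUs : Usᴴ * Us = 1) {ηU Px σw2 μE r : ℝ} (hηU_pos : 0 < ηU)
    (hηU : ∀ i, rowNormSq Us i ≤ ηU) (hpos : ∀ k, 0 < blockNormSq Us k) (hs : 0 < s) (hPx : 0 < Px)
    (hσ : 0 < σw2) (hμE : 0 < μE) {q x : Fin nT → ℝ}
    (hq : ∀ k, q k = s * μE / Px * (Q / blockNormSq Us k - x k))
    (hx : (r • 1 - ∑ k, x k • blockGram Us k).PosDef) :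
    ((s / Px) • (1 : Matrix (Fin s) (Fin s) ℂ) + σw2⁻¹ • ∑ k, q k • blockGram Us k -
      (s / Px * (1 + 1 / σw2 * μE * (1 / ηU - r))) • 1).PosDef := by
  let κ : ℝ := s * μE / (Px * σw2)
  have hκ : 0 < κ := by positivity
  have hmean := sub_nonneg.2 (inv_smul_one_le_sum_smul_blockGram hUs hηU_pos hηU hpos)
  have hsplit : ∑ k, q k • blockGram Us k = (s * μE / Px) •
      (∑ k, (Q / blockNormSq Us k) • blockGram Us k - ∑ k, x k • blockGram Us k) := by
    simp only [hq, ← Finset.sum_sub_distrib, Finset.smul_sum, ← sub_smul, smul_smul]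
  convert (hx.smul hκ).add_posSemidef (smul_nonneg hκ.le hmean).posSemidef using 1
  rw [hsplit]
  simp only [κ]
  module

lemma re_trace_inv_information_lt (hUs : Usᴴ * Us = 1) {ηU Px σw2 μE r : ℝ} (hηU_pos : 0 < ηU)
    (hηU : ∀ i, rowNormSq Us i ≤ ηU) (hpos : ∀ k, 0 < blockNormSq Us k) (hs : 0 < s) (hPx : 0 < Px)
    (hσ : 0 < σw2) (hμE : 0 < μE) (hr : r ≤ 1 / ηU) {q x : Fin nT → ℝ}
    (hq : ∀ k, q k = s * μE / Px * (Q / blockNormSq Us k - x k))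
    (hx : (r • 1 - ∑ k, x k • blockGram Us k).PosDef) :
    RCLike.re ((s / Px) • (1 : Matrix (Fin s) (Fin s) ℂ) +
      σw2⁻¹ • ∑ k, q k • blockGram Us k)⁻¹.trace < Px / (1 + 1 / σw2 * μE * (1 / ηU - r)) := by
  have : Nonempty (Fin s) := ⟨⟨0, hs⟩⟩
  have : 0 < 1 + 1 / σw2 * μE * (1 / ηU - r) :=
    add_pos_of_pos_of_nonneg one_pos (mul_nonneg (by positivity) (sub_nonneg.2 hr))
  convert re_trace_inv_lt (by positivity)
    (posDef_information_sub hUs hηU_pos hηU hpos hs hPx hσ hμE hq hx) using 1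
  rw [Fintype.card_fin]
  field_simp

/-- The energy shortfall `Qμ_E − Ē_k` of block `k`, normalized so that the power of the block is
`p_k = (s μ_E / P_x) (Q / blockNormSq Us k − blockShortfall Us μ_E E k)`. -/
noncomputable def blockShortfall {Ω : Type*} (Us : Matrix (Fin (nT * Q)) (Fin s) ℂ) (μE : ℝ)
    (E : Fin (nT * Q) → Ω → ℝ) (k : Fin nT) (ω : Ω) : ℝ :=
  (Q * μE - ∑ t, E (blockIdx nT Q k t) ω) / (μE * blockNormSq Us k)

lemma blockShortfall_eq_sum {Ω : Type*} (Us : Matrix (Fin (nT * Q)) (Fin s) ℂ) (μE : ℝ)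
    (E : Fin (nT * Q) → Ω → ℝ) (k : Fin nT) (ω : Ω) : blockShortfall Us μE E k ω =
      (∑ t, (μE - E (blockIdx nT Q k t) ω)) / (μE * blockNormSq Us k) := by
  simp [blockShortfall]

variable {Ω : Type*} [MeasurableSpace Ω] {P : Measure Ω} {E : Fin (nT * Q) → Ω → ℝ}
  {ηL μE rE ϱE : ℝ}

lemma measurable_blockShortfall (hE : ∀ i, Measurable (E i)) (k : Fin nT) :
    Measurable (blockShortfall Us μE E k) := by
  unfold blockShortfall
  fun_prop

lemma iIndepFun_blockShortfall (hE : ∀ i, Measurable (E i)) (hindep : iIndepFun E P) :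
    iIndepFun (blockShortfall Us μE E) P := by
  have hblocks := iIndepFun_curry (fun _ => hE _) (hindep.precomp finProdFinEquiv.injective)
  exact hblocks.comp (fun k x => (Q * μE - ∑ t, x t) / (μE * blockNormSq Us k))
    fun k => by fun_prop

lemma abs_blockShortfall_le (hμE : 0 < μE) (hQ : 0 < Q) (hηL_pos : 0 < ηL)
    (hηL : ∀ i, ηL ≤ rowNormSq Us i) (hbdd : ∀ i, ∀ᵐ ω ∂P, 0 ≤ E i ω ∧ E i ω ≤ rE * μE)
    (k : Fin nT) : ∀ᵐ ω ∂P, |blockShortfall Us μE E k ω| ≤ max (rE - 1) 1 / ηL := by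
  filter_upwards [ae_all_iff.2 hbdd] with ω hω
  have hsample : ∀ t, |μE - E (blockIdx nT Q k t) ω| ≤ μE * max (rE - 1) 1 := fun t => by
    obtain ⟨hlower, hupper⟩ := hω (blockIdx nT Q k t)
    rw [abs_le]
    constructor <;> nlinarith [le_max_left (rE - 1) 1, le_max_right (rE - 1) 1]
  have hsum : |∑ t, (μE - E (blockIdx nT Q k t) ω)| ≤ Q * (μE * max (rE - 1) 1) :=
    (Finset.abs_sum_le_sum_abs _ _).trans <| by
      simpa using Finset.sum_le_card_nsmul Finset.univ _ _ fun t _ => hsample t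
  have hnorm := mul_le_blockNormSq hηL k
  have hQ' : (0 : ℝ) < Q := Nat.cast_pos.2 hQ
  rw [blockShortfall_eq_sum, abs_div, abs_of_pos (a := μE * _) (by nlinarith [mul_pos hQ' hηL_pos])]
  calc _ ≤ Q * (μE * max (rE - 1) 1) / (μE * (Q * ηL)) := by gcongr
    _ = max (rE - 1) 1 / ηL := by field_simp

lemma integral_sum_blockIdx (hint : ∀ i, Integrable (E i) P)
    (hmean : ∀ i, ∫ ω, E i ω ∂P = μE) (k : Fin nT) :
    ∫ ω, ∑ t, E (blockIdx nT Q k t) ω ∂P = Q * μE := by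
  rw [integral_finsetSum _ fun t _ => hint _]
  simp [hmean]

lemma integral_blockShortfall [IsProbabilityMeasure P] (hint : ∀ i, Integrable (E i) P)
    (hmean : ∀ i, ∫ ω, E i ω ∂P = μE) (k : Fin nT) :
    ∫ ω, blockShortfall Us μE E k ω ∂P = 0 := by
  simp only [blockShortfall, integral_div]
  rw [integral_sub (integrable_const _) (integrable_finsetSum _ fun t _ => hint _),
    integral_sum_blockIdx hint hmean]
  simp

lemma integral_blockShortfall_sq_le [IsProbabilityMeasure P] (hμE : 0 < μE) (hQ : 0 < Q)
    (hηL_pos : 0 < ηL) (hηL : ∀ i, ηL ≤ rowNormSq Us i) (hL2 : ∀ i, MemLp (E i) 2 P)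
    (hindep : iIndepFun E P) (hmean : ∀ i, ∫ ω, E i ω ∂P = μE)
    (hvar : ∀ i, variance (E i) P ≤ ϱE) (k : Fin nT) :
    ∫ ω, blockShortfall Us μE E k ω ^ 2 ∂P ≤ ϱE / (μE ^ 2 * (Q * ηL ^ 2)) := by
  have hinj : Function.Injective (blockIdx nT Q k) :=
    finProdFinEquiv.injective.comp (Prod.mk_right_injective k)
  have hvar_sum : variance (∑ t, E (blockIdx nT Q k t)) P ≤ Q * ϱE := by
    rw [IndepFun.variance_sum (fun t _ => hL2 _)
      fun t _ t' _ htt' => hindep.indepFun (hinj.ne htt')]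
    simpa using Finset.sum_le_card_nsmul Finset.univ _ ϱE fun t _ => hvar (blockIdx nT Q k t)
  have hsq : ∫ ω, (Q * μE - ∑ t, E (blockIdx nT Q k t) ω) ^ 2 ∂P ≤ Q * ϱE := by
    rw [variance_eq_integral
      (Finset.aemeasurable_sum _ fun t _ => (hL2 _).aemeasurable)] at hvar_sum
    simp only [Finset.sum_apply,
      integral_sum_blockIdx (fun i => (hL2 i).integrable one_le_two) hmean] at hvar_sum
    simpa only [← neg_sub (Q * μE), neg_sq] using hvar_sum
  have hnorm := mul_le_blockNormSq hηL k
  have hϱE : 0 ≤ Q * ϱE := (integral_nonneg fun ω => sq_nonneg _).trans hsq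
  have : (0 : ℝ) < Q := Nat.cast_pos.2 hQ
  simp only [blockShortfall, div_pow, integral_div]
  calc _ ≤ Q * ϱE / (μE * (Q * ηL)) ^ 2 := by gcongr
    _ = ϱE / (μE ^ 2 * (Q * ηL ^ 2)) := by field_simp

lemma measureReal_not_posDef_blockShortfall_le [IsProbabilityMeasure P] {ηU r : ℝ} (hQ : 0 < Q)
    (hUs : Usᴴ * Us = 1) (hηL_pos : 0 < ηL) (hηL : ∀ i, ηL ≤ rowNormSq Us i) (hηU_pos : 0 < ηU)
    (hηU : ∀ i, rowNormSq Us i ≤ ηU) (hμE : 0 < μE) (hϱE : 0 < ϱE)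
    (hE : ∀ i, Measurable (E i)) (hindep : iIndepFun E P) (hmean : ∀ i, ∫ ω, E i ω ∂P = μE)
    (hvar : ∀ i, variance (E i) P ≤ ϱE)
    (hbdd : ∀ i, ∀ᵐ ω ∂P, 0 ≤ E i ω ∧ E i ω ≤ rE * μE) (hr : 0 < r) :
    P.real {ω | ¬(r • 1 - ∑ k, blockShortfall Us μE E k ω • blockGram Us k).PosDef} ≤
      fbt s (1 / ηL * max (rE - 1) 1 * min (Q * ηU) 1)
        (ϱE / μE ^ 2 * (1 / ηL ^ 2) * (1 / Q) * min (Q * ηU) 1) r / 2 := by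
  have hQ' : (0 : ℝ) < Q := Nat.cast_pos.2 hQ
  have hb : 0 < min (Q * ηU) 1 := lt_min (mul_pos hQ' hηU_pos) one_pos
  have : 0 < max (rE - 1) 1 := lt_max_of_lt_right one_pos
  have hL2 : ∀ i, MemLp (E i) 2 P := fun i =>
    memLp_of_bounded (hbdd i) (hE i).aestronglyMeasurable 2
  have hbennett := matrix_bennett (P := P) (r := r) hb (by positivity) (by positivity) hr
    (measurable_blockShortfall hE) (iIndepFun_blockShortfall hE hindep)
    (abs_blockShortfall_le hμE hQ hηL_pos hηL hbdd)
    (integral_blockShortfall (fun i => (hL2 i).integrable one_le_two) hmean)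
    (integral_blockShortfall_sq_le hμE hQ hηL_pos hηL hL2 hindep hmean hvar)
    blockGram_nonneg (blockGram_le_min_smul_one hUs hηU) (sum_blockGram.trans hUs).le
  refine hbennett.trans_eq ?_
  rw [fbt, mul_assoc, mul_div_cancel_left₀ _ two_ne_zero, Fintype.card_fin]
  congr 4 <;> field_simp

end BlockModel

open scoped ComplexOrder in
theorem stmt_0_general
    {Ω : Type*} [MeasurableSpace Ω] {P : Measure Ω} [IsProbabilityMeasure P]
    {s nT Q : ℕ} (hs : 0 < s) (hQ : 0 < Q)
    {Us : Matrix (Fin (nT * Q)) (Fin s) ℂ} (hUs : Usᴴ * Us = 1)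
    {ηL ηU : ℝ} (hηL : ∀ i, ηL ≤ rowNormSq Us i) (hηU : ∀ i, rowNormSq Us i ≤ ηU)
    (hηL_pos : 0 < ηL)
    {Px σw2 : ℝ} (hPx : 0 < Px) (hσ : 0 < σw2)
    {μE ϱE rE : ℝ} (hμE : 0 < μE) (hϱE : 0 < ϱE)
    {E : Fin (nT * Q) → Ω → ℝ} (hEmeas : ∀ i, Measurable (E i))
    (hindep : iIndepFun E P) (hmean : ∀ i, ∫ ω, E i ω ∂P = μE)
    (hvar : ∀ i, variance (E i) P ≤ ϱE)
    (hbdd : ∀ i, ∀ᵐ ω ∂P, 0 ≤ E i ω ∧ E i ω ≤ rE * μE)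
    {S : Fin nT → ℝ}
    (hS : ∀ k, S k = ∑ t : Fin Q, Px / s * rowNormSq Us (blockIdx nT Q k t))
    {p : Fin nT → Ω → ℝ}
    (hp : ∀ k ω, p k ω = (∑ t : Fin Q, E (blockIdx nT Q k t) ω) / S k)
    {G : Ω → Matrix (Fin (nT * Q)) (Fin (nT * Q)) ℂ}
    (hG : ∀ ω, G ω = Matrix.diagonal fun i => ((p (blockOf nT Q i) ω : ℝ) : ℂ))
    {ε : Ω → ℝ}
    (hε : ∀ ω, ε ω =
      ((((s / Px : ℝ) : ℂ) • (1 : Matrix (Fin s) (Fin s) ℂ) +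
        ((σw2 : ℝ) : ℂ)⁻¹ • (Usᴴ * G ω * Us))⁻¹).trace.re)
    {r : ℝ} (hr0 : 0 < r) (hr1 : r ≤ 1 / ηU)
    {errI μI ϱI : ℝ}
    (herrI : errI = Px / (1 + 1 / σw2 * μE * (1 / ηU - r)))
    (hμI : μI = 1 / ηL * max (rE - 1) 1 * min (Q * ηU) 1)
    (hϱI : ϱI = ϱE / μE ^ 2 * (1 / ηL ^ 2) * (1 / Q) * min (Q * ηU) 1) :
    ENNReal.ofReal (1 - fbt s μI ϱI r / 2) ≤ P {ω | ε ω < errI} := by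
  have hQ' : (0 : ℝ) < Q := Nat.cast_pos.2 hQ
  have hηU_pos : 0 < ηU := one_div_pos.1 (hr0.trans_le hr1)
  have hpos : ∀ k, 0 < blockNormSq Us k := fun k =>
    (mul_pos hQ' hηL_pos).trans_le (mul_le_blockNormSq hηL k)
  have hpower : ∀ ω k, p k ω =
      s * μE / Px * (Q / blockNormSq Us k - blockShortfall Us μE E k ω) := by
    intro ω k
    have := hpos k
    rw [hp, hS, ← Finset.mul_sum, blockShortfall, ← blockNormSq]
    field_simp
    ring
  have hfail : {ω | ε ω < errI}ᶜ ⊆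
      {ω | ¬(r • 1 - ∑ k, blockShortfall Us μE E k ω • blockGram Us k).PosDef} := by
    refine Set.compl_subset_compl.2 fun ω hω => ?_
    rw [Set.mem_ofPred_eq, hε, herrI, hG, conjTranspose_mul_diagonal_blockOf_mul (p · ω),
      ← Complex.ofReal_inv, Complex.coe_smul, Complex.coe_smul]
    exact re_trace_inv_information_lt hUs hηU_pos hηU hpos hs hPx hσ hμE hr1 (hpower ω) hω
  rw [hμI, hϱI]
  exact ofReal_one_sub_le_measure <| (measureReal_mono hfail).trans <|
    measureReal_not_posDef_blockShortfall_le hQ hUs hηL_pos hηL hηU_pos hηU hμE hϱE hEmeas hindep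
      hmean hvar hbdd hr0

/-- Bound I for the energy-harvesting block-transmission model: for every
`r ∈ (0, 1/η_U]`, `P(ε < err_I) ≥ 1 − f_bt(μ_I, ϱ_I, r)` with
`err_I = P_x/(1 + (μ_E/σ_w²)(1/η_U − r))`,
`μ_I = (1/η_L)·max{r_E − 1, 1}·min{Q·η_U, 1}` and
`ϱ_I = (ϱ_E/μ_E²)·(1/η_L²)·(1/Q)·min{Q·η_U, 1}`. -/
theorem stmt_0
    {Ω : Type} [MeasureSpace Ω] [IsProbabilityMeasure (ℙ : Measure Ω)]
    (s nT Q : ℕ) (hs : 0 < s) (hnT : 0 < nT) (hQ : 0 < Q) (hsN : s ≤ nT * Q)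
    (Us : Matrix (Fin (nT * Q)) (Fin s) ℂ) (hUs : Usᴴ * Us = 1)
    (ηL ηU : ℝ) (hηL : ηL = ⨅ i, rowNormSq Us i) (hηU : ηU = ⨆ i, rowNormSq Us i)
    (hηLpos : 0 < ηL)
    (Px σw2 : ℝ) (hPx : 0 < Px) (hσ : 0 < σw2)
    (μE ϱE rE : ℝ) (hμE : 0 < μE) (hϱE : 0 < ϱE) (hrE : 1 ≤ rE)
    (E : Fin (nT * Q) → Ω → ℝ) (hEmeas : ∀ i, Measurable (E i))
    (hindep : iIndepFun E ℙ)
    (hident : ∀ i j, IdentDistrib (E i) (E j) ℙ ℙ)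
    (hmean : ∀ i, ∫ ω, E i ω = μE)
    (hvar : ∀ i, variance (E i) ℙ = ϱE)
    (hbdd : ∀ i, ∀ᵐ ω, 0 ≤ E i ω ∧ E i ω ≤ rE * μE)
    (S : Fin nT → ℝ)
    (hS : ∀ k, S k = ∑ t : Fin Q, Px / s * rowNormSq Us (blockIdx nT Q k t))
    (p : Fin nT → Ω → ℝ)
    (hp : ∀ k ω, p k ω = (∑ t : Fin Q, E (blockIdx nT Q k t) ω) / S k)
    (G : Ω → Matrix (Fin (nT * Q)) (Fin (nT * Q)) ℂ)
    (hG : ∀ ω, G ω = Matrix.diagonal fun i => ((p (blockOf nT Q i) ω : ℝ) : ℂ))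
    (ε : Ω → ℝ)
    (hε : ∀ ω, ε ω =
      ((((s / Px : ℝ) : ℂ) • (1 : Matrix (Fin s) (Fin s) ℂ) +
        ((σw2 : ℝ) : ℂ)⁻¹ • (Usᴴ * G ω * Us))⁻¹).trace.re)
    (r : ℝ) (hr0 : 0 < r) (hr1 : r ≤ 1 / ηU)
    (errI μI ϱI : ℝ)
    (herrI : errI = Px / (1 + 1 / σw2 * μE * (1 / ηU - r)))
    (hμI : μI = 1 / ηL * max (rE - 1) 1 * min (Q * ηU) 1)
    (hϱI : ϱI = ϱE / μE ^ 2 * (1 / ηL ^ 2) * (1 / Q) * min (Q * ηU) 1) :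
    ENNReal.ofReal (1 - fbt s μI ϱI r) ≤ ℙ {ω | ε ω < errI} := by
  have hbound := stmt_0_general hs hQ hUs
    (fun i => hηL ▸ ciInf_le (Set.finite_range _).bddBelow i)
    (fun i => hηU ▸ le_ciSup (Set.finite_range _).bddAbove i)
    hηLpos hPx hσ hμE hϱE hEmeas hindep hmean (fun i => (hvar i).le) hbdd hS hp hG hε hr0 hr1
    herrI hμI hϱI
  have hfbt : 0 ≤ fbt s μI ϱI r := by unfold fbt; positivity
  exact (ENNReal.ofReal_le_ofReal (by linarith)).trans hbound
end

section
/- Under the equidistant sample transmission model for low-pass circularly wide-sense stationary signals, for every r in the interval (0, 1), the estimation error satisfies P(ε < err_I^u) ≥ 1 − f_bt(μ_I^u, ϱ_I^u, r), where err_I^u = P_x / (1 + (μ_E/σ_w²)·(N/s)·(1 − r)), μ_I^u = max{r_E − 1, 1}, and ϱ_I^u = (ϱ_E/μ_E²)·(s/N). -/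
open Matrix Finset MeasureTheory ProbabilityTheory

/-- The `n×n` DFT matrix, `[F^n]_{tk} = (1/√n)·exp(−j·(2π/n)·(t−1)(k−1))` (0-based indices). -/
noncomputable def dftMatrix (n : ℕ) : Matrix (Fin n) (Fin n) ℂ :=
  Matrix.of fun t k =>
    (1 / (Real.sqrt n : ℂ)) *
      Complex.exp (-Complex.I * ((2 * Real.pi / n : ℝ) : ℂ) * (t.1 : ℂ) * (k.1 : ℂ))

/-!
`U_s† G U_s` only involves the `s` rows of `U_s` at the sampling instants. Being equally spaced,
they form, up to a diagonal phase and the factor `Q^(-1/2)`, a unitary DFT matrix of size `s`. Hence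
`(s / P_x) I + σ_w⁻² U_s† G U_s` is unitarily diagonalized, and
`ε = ∑ k, (P_x / s) / (1 + Ē_k / σ_w²)`, which is below `err_I^u` as soon as every block energy
`Ē_k` exceeds `Q μ_E (1 - r)`. The lower tail of each `Ē_k`, a sum of `Q` independent variables, is
controlled by Bennett's inequality. It only needs an upper bound on `μ_E - E_t`, and `E_t ≥ 0`
provides the bound `μ_E`. A union bound over the `s` blocks concludes.
-/

section ExpBound

open intervalIntegral

lemma exp_sub_one_sub_self_eq_sq_mul_integral (x : ℝ) :
    Real.exp x - 1 - x = x ^ 2 * ∫ t in (0 : ℝ)..1, (1 - t) * Real.exp (t * x) := by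
  have hderiv (t : ℝ) : HasDerivAt (fun t => (1 - t) * x * Real.exp (t * x) + Real.exp (t * x))
      (x ^ 2 * ((1 - t) * Real.exp (t * x))) t := by
    have hexp : HasDerivAt (fun t => Real.exp (t * x)) (Real.exp (t * x) * x) t := by
      simpa using ((hasDerivAt_id t).mul_const x).exp
    have hlin : HasDerivAt (fun t => (1 - t) * x) (-x) t := by
      simpa using ((hasDerivAt_id t).const_sub 1).mul_const x
    exact ((hlin.mul hexp).add hexp).congr_deriv (by ring)
  rw [← intervalIntegral.integral_const_mul, integral_eq_sub_of_hasDerivAt (fun t _ => hderiv t)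
    (Continuous.intervalIntegrable (by fun_prop) _ _)]
  simp only [sub_self, zero_mul, one_mul, zero_add, sub_zero, Real.exp_zero, mul_one]
  ring

lemma exp_le_one_add_self_add_sq_mul {x c : ℝ} (hc : 0 < c) (hx : x ≤ c) :
    Real.exp x ≤ 1 + x + x ^ 2 * ((Real.exp c - 1 - c) / c ^ 2) := by
  have hmono : ∫ t in (0 : ℝ)..1, (1 - t) * Real.exp (t * x) ≤
      ∫ t in (0 : ℝ)..1, (1 - t) * Real.exp (t * c) := by
    refine integral_mono_on zero_le_one (Continuous.intervalIntegrable (by fun_prop) _ _)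
      (Continuous.intervalIntegrable (by fun_prop) _ _) fun t ht => ?_
    have := sub_nonneg.2 ht.2
    have := ht.1
    gcongr
  have hx_eq := exp_sub_one_sub_self_eq_sq_mul_integral x
  rw [exp_sub_one_sub_self_eq_sq_mul_integral c, mul_div_cancel_left₀ _ (by positivity)]
  linarith [mul_le_mul_of_nonneg_left hmono (sq_nonneg x)]

end ExpBound

section Bennett

variable {Ω ι : Type*} [MeasurableSpace Ω] {P : Measure Ω}

lemma mgf_le_exp_variance_mul [IsProbabilityMeasure P] {X : Ω → ℝ} {b l : ℝ}
    (hX : MemLp X 2 P) (hmean : P[X] = 0) (hb : 0 < b) (hXb : ∀ᵐ ω ∂P, X ω ≤ b) (hl : 0 < l) :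
    mgf X P l ≤ Real.exp (Var[X; P] * ((Real.exp (l * b) - 1 - l * b) / b ^ 2)) := by
  set K := (Real.exp (l * b) - 1 - l * b) / b ^ 2 with hK
  have hX_int : Integrable X P := hX.integrable one_le_two
  have hXsq_int : Integrable (fun ω => X ω ^ 2) P := hX.integrable_sq
  have hXm : AEMeasurable X P := hX.aestronglyMeasurable.aemeasurable
  calc mgf X P l ≤ ∫ ω, (1 + l * X ω + X ω ^ 2 * K) ∂P := by
        refine integral_mono_ae (integrable_exp_mul_of_le l b hl.le hXm hXb) (by fun_prop) ?_
        filter_upwards [hXb] with ω hω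
        refine (exp_le_one_add_self_add_sq_mul (c := l * b) (by positivity)
          (by gcongr)).trans_eq ?_
        rw [hK]
        field_simp
    _ = Var[X; P] * K + 1 := by
        rw [integral_add (by fun_prop) (by fun_prop), integral_add (by fun_prop) (by fun_prop),
          integral_const_mul, integral_mul_const, hmean, variance_of_integral_eq_zero hXm hmean]
        simp [add_comm]
    _ ≤ Real.exp (Var[X; P] * K) := Real.add_one_le_exp _

variable [Fintype ι]

lemma measureReal_le_sum_le_exp_neg_mul_add {X : ι → Ω → ℝ} {b v l : ℝ}
    (hindep : iIndepFun X P) (hX : ∀ i, MemLp (X i) 2 P) (hmean : ∀ i, P[X i] = 0)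
    (hb : 0 < b) (hXb : ∀ i, ∀ᵐ ω ∂P, X i ω ≤ b) (hv : ∑ i, Var[X i; P] ≤ v)
    (hl : 0 < l) (r : ℝ) :
    P.real {ω | r ≤ ∑ i, X i ω} ≤
      Real.exp (-l * r + v * ((Real.exp (l * b) - 1 - l * b) / b ^ 2)) := by
  have := hindep.isProbabilityMeasure
  have hXm (i : ι) : AEMeasurable (X i) P := (hX i).aestronglyMeasurable.aemeasurable
  have hsum_le : ∀ᵐ ω ∂P, (∑ i, X i) ω ≤ Fintype.card ι * b := by
    filter_upwards [ae_all_iff.2 hXb] with ω hω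
    rw [Finset.sum_apply]
    simpa using Finset.sum_le_card_nsmul univ (X · ω) b fun i _ => hω i
  have hK : 0 ≤ (Real.exp (l * b) - 1 - l * b) / b ^ 2 :=
    div_nonneg (by linarith [Real.add_one_le_exp (l * b)]) (sq_nonneg b)
  calc P.real {ω | r ≤ ∑ i, X i ω} = P.real {ω | r ≤ (∑ i, X i) ω} := by
        simp only [Finset.sum_apply]
    _ ≤ Real.exp (-l * r) * mgf (∑ i, X i) P l :=
        measure_ge_le_exp_mul_mgf r hl.le
          (integrable_exp_mul_of_le l _ hl.le (by fun_prop) hsum_le)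
    _ = Real.exp (-l * r) * ∏ i, mgf (X i) P l := by rw [hindep.mgf_sum₀ hXm]
    _ ≤ Real.exp (-l * r) *
          ∏ i, Real.exp (Var[X i; P] * ((Real.exp (l * b) - 1 - l * b) / b ^ 2)) := by
        gcongr with i
        · exact fun i _ => mgf_nonneg
        · exact mgf_le_exp_variance_mul (hX i) (hmean i) hb (hXb i) hl
    _ ≤ _ := by
        rw [← Real.exp_sum, ← Finset.sum_mul, ← Real.exp_add]
        gcongr

theorem bennett_inequality {X : ι → Ω → ℝ} {b v r : ℝ}
    (hindep : iIndepFun X P) (hX : ∀ i, MemLp (X i) 2 P) (hmean : ∀ i, P[X i] = 0)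
    (hb : 0 < b) (hXb : ∀ i, ∀ᵐ ω ∂P, X i ω ≤ b) (hv0 : 0 < v) (hv : ∑ i, Var[X i; P] ≤ v)
    (hr : 0 < r) :
    P.real {ω | r ≤ ∑ i, X i ω} ≤ Real.exp (-(v / b ^ 2) * hfun (b * r / v)) := by
  have ha : 0 < b * r / v := by positivity
  -- This `l` minimises the exponent `-l * r + v * (exp (l * b) - 1 - l * b) / b ^ 2`.
  set l := Real.log (1 + b * r / v) / b with hl
  have hl0 : 0 < l := div_pos (Real.log_pos (by linarith)) hb
  have hlb : l * b = Real.log (1 + b * r / v) := div_mul_cancel₀ _ hb.ne'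
  refine (measureReal_le_sum_le_exp_neg_mul_add hindep hX hmean hb hXb hv hl0 r).trans_eq ?_
  rw [hlb, Real.exp_log (by linarith), hfun, hl]
  congr 1
  field_simp
  ring

theorem bennett_lower_tail_of_nonneg {Y : ι → Ω → ℝ} {b v r : ℝ}
    (hindep : iIndepFun Y P) (hY : ∀ i, MemLp (Y i) 2 P) (hY0 : ∀ i, 0 ≤ᵐ[P] Y i)
    (hb : 0 < b) (hmean : ∀ i, P[Y i] ≤ b) (hv0 : 0 < v) (hv : ∑ i, Var[Y i; P] ≤ v)
    (hr : 0 < r) :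
    P.real {ω | ∑ i, Y i ω ≤ ∑ i, P[Y i] - r} ≤
      Real.exp (-(v / b ^ 2) * hfun (b * r / v)) := by
  have := hindep.isProbabilityMeasure
  have hY_int (i : ι) : Integrable (Y i) P := (hY i).integrable one_le_two
  have hbennett := bennett_inequality (P := P) (X := fun i ω => P[Y i] - Y i ω)
    (hindep.comp (fun i y => (∫ ω, Y i ω ∂P) - y) fun i => by fun_prop)
    (fun i => (memLp_const _).sub (hY i))
    (fun i => by rw [integral_sub (integrable_const _) (hY_int i)]; simp) hb
    (fun i => by filter_upwards [hY0 i] with ω hω using (sub_le_self _ hω).trans (hmean i)) hv0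
    (by simpa only [variance_const_sub (hY _).aestronglyMeasurable] using hv) hr
  simpa only [Finset.sum_sub_distrib, le_sub_comm] using hbennett

theorem bennett_relative_lower_tail [Nonempty ι] {Y : ι → Ω → ℝ} {b m v r : ℝ}
    (hindep : iIndepFun Y P) (hY : ∀ i, MemLp (Y i) 2 P) (hY0 : ∀ i, 0 ≤ᵐ[P] Y i) (hm : 0 < m)
    (hmean : ∀ i, P[Y i] = m) (hv0 : 0 < v) (hv : ∀ i, Var[Y i; P] ≤ v)
    (hb : (Fintype.card ι : ℝ)⁻¹ ≤ b) (hr : 0 < r) :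
    P.real {ω | ∑ i, Y i ω ≤ Fintype.card ι * m * (1 - r)} ≤
      Real.exp (-(v / m ^ 2 / Fintype.card ι / b ^ 2) *
        hfun (b * r / (v / m ^ 2 / Fintype.card ι))) := by
  have hn : (0 : ℝ) < Fintype.card ι := Nat.cast_pos.2 Fintype.card_pos
  have hb0 : 0 < b := (inv_pos.2 hn).trans_le hb
  have hm_le : m ≤ b * (Fintype.card ι * m) := by
    rw [← mul_assoc]
    exact le_mul_of_one_le_left hm.le ((inv_le_iff_one_le_mul₀ hn).1 hb)
  have htail := bennett_lower_tail_of_nonneg hindep hY hY0 (b := b * (Fintype.card ι * m))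
    (v := Fintype.card ι * v) (r := Fintype.card ι * m * r) (by positivity)
    (fun i => (hmean i).trans_le hm_le) (by positivity)
    (by simpa using Finset.sum_le_card_nsmul univ _ v fun i _ => hv i) (by positivity)
  have hset : ∑ i, P[Y i] - Fintype.card ι * m * r = Fintype.card ι * m * (1 - r) := by
    simp only [hmean, Finset.sum_const, card_univ, nsmul_eq_mul]
    ring
  rw [hset] at htail
  convert htail using 3 <;> field_simp

end Bennett

lemma one_sub_sum_measureReal_le {Ω ι : Type*} [MeasurableSpace Ω] {P : Measure Ω}
    [IsProbabilityMeasure P] [Fintype ι] {A : Set Ω} {B : ι → Set Ω}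
    (hAB : ∀ ω, (∀ i, ω ∉ B i) → ω ∈ A) : 1 - ∑ i, P.real (B i) ≤ P.real A := by
  have hcover : A ∪ ⋃ i, B i = Set.univ :=
    Set.eq_univ_of_forall fun ω => or_iff_not_imp_right.2 fun hω => hAB ω (by simpa using hω)
  have hunion := measureReal_union_le (μ := P) A (⋃ i, B i)
  rw [hcover, probReal_univ] at hunion
  linarith [measureReal_iUnion_fintype_le (μ := P) B]

lemma sum_range_pow_div_pow_pow {K : Type*} [Field K] {ζ : K} {n : ℕ} (hζ : IsPrimitiveRoot ζ n)
    (a b : Fin n) :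
    ∑ k ∈ range n, (ζ ^ b.1 / ζ ^ a.1) ^ k = if a = b then (n : K) else 0 := by
  have hζ0 : ζ ≠ 0 := hζ.ne_zero a.pos.ne'
  split_ifs with hab
  · simp [hab, hζ0]
  · have hne : ζ ^ b.1 / ζ ^ a.1 ≠ 1 := fun h =>
      hab (Fin.ext (hζ.pow_inj b.2 a.2 ((div_eq_one_iff_eq (pow_ne_zero _ hζ0)).1 h))).symm
    rw [geom_sum_eq hne, div_pow, pow_right_comm ζ b, pow_right_comm ζ a, hζ.pow_eq_one]
    simp

/-- The primitive `n`-th root of unity `exp(−j·2π/n)` whose powers are, up to normalization, the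
entries of `dftMatrix n`. -/
noncomputable def dftRoot (n : ℕ) : ℂ := Complex.exp (-(2 * Real.pi * Complex.I / n))

lemma isPrimitiveRoot_dftRoot {n : ℕ} (hn : n ≠ 0) : IsPrimitiveRoot (dftRoot n) n := by
  simpa only [dftRoot, Complex.exp_neg] using (Complex.isPrimitiveRoot_exp n hn).inv

lemma dftMatrix_apply_eq_pow (n : ℕ) (t k : Fin n) :
    dftMatrix n t k = (Real.sqrt n : ℂ)⁻¹ * dftRoot n ^ (t.1 * k.1) := by
  rw [dftMatrix, of_apply, dftRoot, one_div, ← Complex.exp_nat_mul]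
  congr 2
  push_cast
  ring

lemma star_dftRoot (n : ℕ) : star (dftRoot n) = (dftRoot n)⁻¹ := by
  rw [dftRoot, Complex.star_def, ← Complex.exp_conj, ← Complex.exp_neg]
  simp only [map_neg, map_div₀, map_mul, Complex.conj_ofReal, Complex.conj_I, map_natCast,
    map_ofNat, mul_neg, neg_div]

lemma star_dftMatrix_mul_dftMatrix {n : ℕ} (t k l : Fin n) :
    star (dftMatrix n t k) * dftMatrix n t l =
      (n : ℂ)⁻¹ * (dftRoot n ^ l.1 / dftRoot n ^ k.1) ^ t.1 := by
  have hsqrt : (Real.sqrt n : ℂ) * Real.sqrt n = n := by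
    rw [← Complex.ofReal_mul, Real.mul_self_sqrt n.cast_nonneg, Complex.ofReal_natCast]
  rw [dftMatrix_apply_eq_pow, dftMatrix_apply_eq_pow, star_mul', star_pow, star_dftRoot, star_inv₀,
    Complex.star_def, Complex.conj_ofReal, mul_mul_mul_comm, ← mul_inv, hsqrt, div_pow, inv_pow,
    ← pow_mul, ← pow_mul, mul_comm t.1, mul_comm t.1, mul_comm (dftRoot n ^ _)⁻¹, div_eq_mul_inv]

/-- The matrix `U_s` whose columns span the low-pass band: the first `s` columns of the DFT matrix
of size `N = s * Q`. -/
noncomputable def lowPassDft (s : ℕ) {Q : ℕ} (hQ : 0 < Q) : Matrix (Fin (s * Q)) (Fin s) ℂ :=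
  (dftMatrix (s * Q)).submatrix id (Fin.castLE (Nat.le_mul_of_pos_right s hQ))

lemma conjTranspose_mul_self_lowPassDft_submatrix {s Q : ℕ} (hQ : 0 < Q) (td : Fin Q) :
    ((lowPassDft s hQ).submatrix (blockIdx s Q · td) id)ᴴ *
      (lowPassDft s hQ).submatrix (blockIdx s Q · td) id = (Q : ℂ)⁻¹ • 1 := by
  ext a b
  have hs : s ≠ 0 := a.pos.ne'
  set ζ := dftRoot (s * Q)
  have hζ : IsPrimitiveRoot (ζ ^ Q) s :=
    (isPrimitiveRoot_dftRoot (mul_ne_zero hs hQ.ne')).pow (by positivity) (mul_comm s Q)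
  have hterm (k : Fin s) :
      star (lowPassDft s hQ (blockIdx s Q k td) a) * lowPassDft s hQ (blockIdx s Q k td) b =
        ((s * Q : ℕ) : ℂ)⁻¹ * (ζ ^ b.1 / ζ ^ a.1) ^ td.1 *
          ((ζ ^ Q) ^ b.1 / (ζ ^ Q) ^ a.1) ^ k.1 := by
    refine (star_dftMatrix_mul_dftMatrix _ _ _).trans ?_
    rw [id_eq, blockIdx, finProdFinEquiv_apply_val, pow_add, pow_mul, ← mul_assoc, div_pow _ _ Q,
      pow_right_comm ζ Q, pow_right_comm ζ Q]
    rfl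
  simp only [mul_apply, conjTranspose_apply, submatrix_apply, id_eq, hterm]
  rw [← Finset.mul_sum, Fin.sum_univ_eq_sum_range (fun k => ((ζ ^ Q) ^ b.1 / (ζ ^ Q) ^ a.1) ^ k),
    sum_range_pow_div_pow_pow hζ, Matrix.smul_apply, one_apply]
  split_ifs with hab
  · have hζ0 : ζ ≠ 0 := Complex.exp_ne_zero _
    simp [hab, hζ0, hs]
  · simp

section MatrixTrace

variable {l m n o R K : Type*} [Fintype n] [DecidableEq n] [CommSemiring R] [Field K]

lemma mul_sum_smul_single_mul [Fintype m] [DecidableEq m] (A : Matrix l m R) (B : Matrix m o R)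
    (f : n → m) (p : n → R) :
    A * (∑ k, p k • single (f k) (f k) (1 : R)) * B =
      A.submatrix id f * diagonal p * B.submatrix f id := by
  ext a b
  rw [Matrix.mul_sum, Matrix.sum_mul, Matrix.sum_apply, mul_apply]
  refine Finset.sum_congr rfl fun k _ => ?_
  rw [single_eq_single_vecMulVec_single, Matrix.mul_smul, Matrix.smul_mul, mul_vecMulVec,
    vecMulVec_mul, Matrix.smul_apply, vecMulVec_apply, mul_diagonal]
  simp only [mulVec_single, MulOpposite.op_one, Pi.smul_apply, col_apply, one_smul, single_vecMul,
    row_apply, smul_eq_mul, one_mul, submatrix_apply, id_eq]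
  ring

lemma trace_inv_smul_one_add_smul_mul_diagonal_mul {V W : Matrix n n K} {a c d : K} {p : n → K}
    (ha : a ≠ 0) (hWV : W * V = a • 1) (hp : ∀ k, c + d * (a * p k) ≠ 0) :
    (c • (1 : Matrix n n K) + d • (W * diagonal p * V))⁻¹.trace =
      ∑ k, (c + d * (a * p k))⁻¹ := by
  have hleft : (a⁻¹ • W) * V = 1 := by rw [Matrix.smul_mul, hWV, inv_smul_smul₀ ha]
  have hunit : IsUnit V.det := isUnit_det_of_left_inverse hleft
  have hW : W = a • V⁻¹ := by rw [inv_eq_left_inv hleft, smul_inv_smul₀ ha]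
  have hconj : c • (1 : Matrix n n K) + d • (W * diagonal p * V) =
      V⁻¹ * diagonal (fun k => c + d * (a * p k)) * V := by
    have hdiag : diagonal (fun k => c + d * (a * p k)) =
        c • (1 : Matrix n n K) + (d * a) • diagonal p := by
      rw [smul_one_eq_diagonal, ← diagonal_smul, diagonal_add]
      simp [mul_assoc]
    rw [hdiag, hW, Matrix.mul_add, Matrix.add_mul]
    simp only [Matrix.mul_smul, Matrix.smul_mul, Matrix.mul_one, nonsing_inv_mul _ hunit, smul_smul]
  have hinv : (diagonal fun k => c + d * (a * p k))⁻¹ =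
      diagonal fun k => (c + d * (a * p k))⁻¹ :=
    inv_eq_left_inv (by simp [diagonal_mul_diagonal, inv_mul_cancel₀ (hp _)])
  rw [hconj, Matrix.mul_inv_rev, Matrix.mul_inv_rev, nonsing_inv_nonsing_inv _ hunit,
    trace_mul_comm, Matrix.mul_assoc, mul_nonsing_inv _ hunit, Matrix.mul_one, hinv, trace_diagonal]

end MatrixTrace

/-- The gain matrix `G` of equidistant sampling: gain `p k` at sample `td` of block `k`, and no
transmission at the other instants. -/
noncomputable def equidistantGain {s Q : ℕ} (td : Fin Q) (p : Fin s → ℝ) :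
    Matrix (Fin (s * Q)) (Fin (s * Q)) ℂ :=
  ∑ k, (p k : ℂ) • single (blockIdx s Q k td) (blockIdx s Q k td) 1

/-- The estimation error `ε = tr[((s/P_x) I + σ_w⁻² U_s† G U_s)⁻¹]` as a function of the energies
`e k` harvested in the blocks, which enter through the gains `e k * (N / P_x)` with `N = s * Q`. -/
noncomputable def estimationError {s Q : ℕ} (td : Fin Q) (Px σw2 : ℝ) (e : Fin s → ℝ) : ℝ :=
  ((((s / Px : ℝ) : ℂ) • (1 : Matrix (Fin s) (Fin s) ℂ) + (σw2 : ℂ)⁻¹ •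
    ((lowPassDft s td.pos)ᴴ * equidistantGain td (fun k => e k * (((s * Q : ℕ) : ℝ) / Px)) *
      lowPassDft s td.pos))⁻¹).trace.re

section EstimationError

variable {s Q : ℕ} {Px σw2 : ℝ} {e : Fin s → ℝ}

lemma estimationError_eq_sum (td : Fin Q) (hPx : 0 < Px) (hσ : 0 < σw2) (he : ∀ k, 0 ≤ e k) :
    estimationError td Px σw2 e = ∑ k, Px / s / (1 + e k / σw2) := by
  have hterm (k : Fin s) : ((s / Px : ℝ) : ℂ) +
      (σw2 : ℂ)⁻¹ * ((Q : ℂ)⁻¹ * ((e k * (((s * Q : ℕ) : ℝ) / Px) : ℝ) : ℂ)) =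
        ((s / Px * (1 + e k / σw2) : ℝ) : ℂ) := by
    have hQ : (Q : ℂ) ≠ 0 := Nat.cast_ne_zero.2 td.pos.ne'
    push_cast
    field_simp
  have hne (k : Fin s) : s / Px * (1 + e k / σw2) ≠ 0 := by
    have := he k
    have : (0 : ℝ) < s := Nat.cast_pos.2 k.pos
    positivity
  rw [estimationError, equidistantGain, mul_sum_smul_single_mul, ← conjTranspose_submatrix,
    trace_inv_smul_one_add_smul_mul_diagonal_mul
      (inv_ne_zero (Nat.cast_ne_zero.2 td.pos.ne'))
      (conjTranspose_mul_self_lowPassDft_submatrix td.pos td)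
      (fun k => by rw [hterm]; exact Complex.ofReal_ne_zero.2 (hne k)),
    Complex.re_sum]
  refine Finset.sum_congr rfl fun k _ => ?_
  rw [hterm, ← Complex.ofReal_inv, Complex.ofReal_re, mul_inv, inv_div, ← div_eq_mul_inv]

lemma estimationError_lt (td : Fin Q) (hs : 0 < s) (hPx : 0 < Px) (hσ : 0 < σw2) {m : ℝ}
    (hm : 0 ≤ m) (he : ∀ k, m < e k) :
    estimationError td Px σw2 e < Px / (1 + m / σw2) := by
  have : Nonempty (Fin s) := ⟨⟨0, hs⟩⟩
  calc estimationError td Px σw2 e = ∑ k, Px / s / (1 + e k / σw2) :=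
        estimationError_eq_sum td hPx hσ fun k => hm.trans (he k).le
    _ < ∑ _k : Fin s, Px / s / (1 + m / σw2) := by
        gcongr with k
        · exact univ_nonempty
        · exact he k
    _ = Px / (1 + m / σw2) := by
        rw [Finset.sum_const, card_univ, Fintype.card_fin, nsmul_eq_mul, ← mul_div_assoc,
          mul_div_cancel₀ _ (by positivity)]

end EstimationError

lemma blockIdx_injective (nT Q : ℕ) (k : Fin nT) : Function.Injective (blockIdx nT Q k) :=
  finProdFinEquiv.injective.comp (Prod.mk_right_injective k)

lemma fbt_nonneg (s : ℕ) (μ ϱ r : ℝ) : 0 ≤ fbt s μ ϱ r := by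
  unfold fbt
  positivity

theorem stmt_3_general {Ω : Type*} [MeasurableSpace Ω] {P : Measure Ω} [IsProbabilityMeasure P]
    {s Q : ℕ} (hs : 0 < s) (td : Fin Q) {Px σw2 : ℝ} (hPx : 0 < Px) (hσ : 0 < σw2)
    {μE ϱE : ℝ} (hμE : 0 < μE) (hϱE : 0 < ϱE) {E : Fin (s * Q) → Ω → ℝ}
    (hindep : ∀ k, iIndepFun (fun t => E (blockIdx s Q k t)) P)
    (hE : ∀ i, MemLp (E i) 2 P) (hE0 : ∀ i, 0 ≤ᵐ[P] E i)
    (hmean : ∀ i, P[E i] = μE) (hvar : ∀ i, Var[E i; P] ≤ ϱE)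
    {b r : ℝ} (hb : (Q : ℝ)⁻¹ ≤ b) (hr0 : 0 < r) (hr1 : r ≤ 1) :
    ENNReal.ofReal (1 - fbt s b (ϱE / μE ^ 2 * ((s : ℝ) / ((s * Q : ℕ) : ℝ))) r / 2) ≤
      P {ω | estimationError td Px σw2 (fun k => ∑ t, E (blockIdx s Q k t) ω) <
        Px / (1 + μE / σw2 * (((s * Q : ℕ) : ℝ) / s) * (1 - r))} := by
  have : Nonempty (Fin Q) := ⟨td⟩
  have hsR : (s : ℝ) ≠ 0 := Nat.cast_ne_zero.2 hs.ne'
  have hϱ : ϱE / μE ^ 2 * ((s : ℝ) / ((s * Q : ℕ) : ℝ)) = ϱE / μE ^ 2 / Q := by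
    rw [Nat.cast_mul, div_mul_cancel_left₀ hsR, ← div_eq_mul_inv]
  have herr : μE / σw2 * (((s * Q : ℕ) : ℝ) / s) * (1 - r) = Q * μE * (1 - r) / σw2 := by
    rw [Nat.cast_mul, mul_div_cancel_left₀ _ hsR]
    ring
  rw [hϱ, herr]
  have htail (k : Fin s) : P.real {ω | ∑ t, E (blockIdx s Q k t) ω ≤ Q * μE * (1 - r)} ≤
      Real.exp (-(ϱE / μE ^ 2 / Q / b ^ 2) * hfun (b * r / (ϱE / μE ^ 2 / Q))) := by
    simpa only [Fintype.card_fin] using bennett_relative_lower_tail (hindep k) (fun t => hE _)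
      (fun t => hE0 _) hμE (fun t => hmean _) hϱE (fun t => hvar _)
      (by rwa [Fintype.card_fin]) hr0
  have hsum : ∑ k, P.real {ω | ∑ t, E (blockIdx s Q k t) ω ≤ Q * μE * (1 - r)} ≤
      fbt s b (ϱE / μE ^ 2 / Q) r / 2 := by
    refine (Finset.sum_le_sum fun k _ => htail k).trans_eq ?_
    rw [Finset.sum_const, card_univ, Fintype.card_fin, nsmul_eq_mul, fbt]
    ring
  refine ENNReal.ofReal_le_of_le_toReal ((sub_le_sub_left hsum 1).trans ?_)
  refine one_sub_sum_measureReal_le fun ω hω => ?_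
  have hm : 0 ≤ Q * μE * (1 - r) := mul_nonneg (by positivity) (sub_nonneg.2 hr1)
  exact estimationError_lt td hs hPx hσ hm fun k => not_le.1 (hω k)

/-- Equidistant sample transmission for low-pass c.w.s.s. signals (`N = s·Q`, `U_s` the first
`s` columns of the `N×N` DFT matrix): for every `r ∈ (0, 1)`,
`P(ε < err_I^u) ≥ 1 − f_bt(μ_I^u, ϱ_I^u, r)` with
`err_I^u = P_x/(1 + (μ_E/σ_w²)·(N/s)·(1 − r))`, `μ_I^u = max{r_E − 1, 1}` and
`ϱ_I^u = (ϱ_E/μ_E²)·(s/N)`. -/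
theorem stmt_3
    {Ω : Type} [MeasureSpace Ω] [IsProbabilityMeasure (ℙ : Measure Ω)]
    (s Q : ℕ) (hs : 0 < s) (hQ : 0 < Q) (td : Fin Q)
    (Us : Matrix (Fin (s * Q)) (Fin s) ℂ)
    (hUs : ∀ (i : Fin (s * Q)) (j : Fin s),
      Us i j = dftMatrix (s * Q) i ⟨j.1, lt_of_lt_of_le j.2 (Nat.le_mul_of_pos_right s hQ)⟩)
    (Px σw2 : ℝ) (hPx : 0 < Px) (hσ : 0 < σw2)
    (μE ϱE rE : ℝ) (hμE : 0 < μE) (hϱE : 0 < ϱE) (hrE : 1 ≤ rE)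
    (E : Fin (s * Q) → Ω → ℝ) (hEmeas : ∀ i, Measurable (E i))
    (hindep : iIndepFun E ℙ)
    (hident : ∀ i j, IdentDistrib (E i) (E j) ℙ ℙ)
    (hmean : ∀ i, ∫ ω, E i ω = μE)
    (hvar : ∀ i, variance (E i) ℙ = ϱE)
    (hbdd : ∀ i, ∀ᵐ ω, 0 ≤ E i ω ∧ E i ω ≤ rE * μE)
    (p : Fin s → Ω → ℝ)
    (hp : ∀ k ω, p k ω = (∑ t : Fin Q, E (blockIdx s Q k t) ω) * (((s * Q : ℕ) : ℝ) / Px))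
    (G : Ω → Matrix (Fin (s * Q)) (Fin (s * Q)) ℂ)
    (hG : ∀ ω, G ω = ∑ k : Fin s, ((p k ω : ℝ) : ℂ) •
      Matrix.single (blockIdx s Q k td) (blockIdx s Q k td) 1)
    (ε : Ω → ℝ)
    (hε : ∀ ω, ε ω =
      ((((s / Px : ℝ) : ℂ) • (1 : Matrix (Fin s) (Fin s) ℂ) +
        ((σw2 : ℝ) : ℂ)⁻¹ • (Usᴴ * G ω * Us))⁻¹).trace.re)
    (r : ℝ) (hr0 : 0 < r) (hr1 : r < 1)
    (errIu μIu ϱIu : ℝ)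
    (herrIu : errIu = Px / (1 + μE / σw2 * (((s * Q : ℕ) : ℝ) / s) * (1 - r)))
    (hμIu : μIu = max (rE - 1) 1)
    (hϱIu : ϱIu = ϱE / μE ^ 2 * ((s : ℝ) / ((s * Q : ℕ) : ℝ))) :
    ENNReal.ofReal (1 - fbt s μIu ϱIu r) ≤ ℙ {ω | ε ω < errIu} := by
  have hε_eq (ω : Ω) : ε ω = estimationError td Px σw2 fun k => ∑ t, E (blockIdx s Q k t) ω := by
    obtain rfl : Us = lowPassDft s hQ := Matrix.ext hUs
    simp only [hε, hG, hp, estimationError, equidistantGain]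
  have hμ : (Q : ℝ)⁻¹ ≤ μIu := (Nat.cast_inv_le_one Q).trans (hμIu ▸ le_max_right _ _)
  simp only [hε_eq, herrIu]
  exact (ENNReal.ofReal_le_ofReal (by linarith [fbt_nonneg s μIu ϱIu r])).trans
    (hϱIu ▸ stmt_3_general hs td hPx hσ hμE hϱE
      (fun k => hindep.precomp (blockIdx_injective s Q k))
      (fun i => memLp_of_bounded (hbdd i) (hEmeas i).aestronglyMeasurable 2)
      (fun i => (hbdd i).mono fun ω h => h.1) hmean (fun i => (hvar i).le) hμ hr0 hr1.le)
end

section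
/- Consider the off-line problem of minimizing ε̄(B) = tr[((s/P_x)·I_s + (1/σ_w²)·U_s† B U_s)^{−1}] over N×N diagonal matrices B = diag(b_1,…,b_N) with b_t ≥ 0 for all t, subject to the total-energy constraint Σ_{t=1}^{N} b_t·σ_{x,t}² = E_tot. Then the uniform allocation b_t = E_tot/P_x for all t is feasible and optimal, and the minimum value equals ε_d = P_x / (1 + E_tot/(s·σ_w²)); that is, every feasible B satisfies ε̄(B) ≥ P_x / (1 + E_tot/(s·σ_w²)), with equality at the uniform allocation. -/
open Matrix Finset

/-!
For a positive definite `s × s` matrix `M`, the quadratic `c ↦ tr[(I - cM) M⁻¹ (I - cM)]` is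
nonnegative, so its discriminant is nonpositive: `s² ≤ tr M · tr M⁻¹`. The energy constraint fixes
the trace of `(s/P_x) I + (1/σ_w²) U† B U`, hence bounds the trace of its inverse from below. The
uniform allocation makes this matrix a multiple of the identity, because `U† U = I`, and multiples
of the identity attain the bound.
-/

open scoped ComplexOrder

section TraceInverse

variable {𝕜 n : Type*} [RCLike 𝕜] [Fintype n] [DecidableEq n]

lemma conjTranspose_one_sub_smul_mul_inv_mul_self {M : Matrix n n 𝕜} (hM : M.IsHermitian)
    (hdet : IsUnit M.det) (c : ℝ) :
    (1 - (c : 𝕜) • M)ᴴ * M⁻¹ * (1 - (c : 𝕜) • M) =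
      ((c * c : ℝ) : 𝕜) • M - ((2 * c : ℝ) : 𝕜) • 1 + M⁻¹ := by
  simp only [conjTranspose_sub, conjTranspose_one, conjTranspose_smul, hM.eq,
    RCLike.star_def, RCLike.conj_ofReal, sub_mul, mul_sub, one_mul, mul_one, smul_mul_assoc,
    mul_smul_comm, mul_nonsing_inv _ hdet, nonsing_inv_mul _ hdet]
  push_cast
  module

lemma sq_card_le_re_trace_mul_re_trace_inv {M : Matrix n n 𝕜} (hM : M.PosDef) :
    (Fintype.card n : ℝ) ^ 2 ≤ RCLike.re M.trace * RCLike.re M⁻¹.trace := by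
  have hdet : IsUnit M.det := (isUnit_iff_isUnit_det M).mp hM.isUnit
  have quadratic_nonneg (c : ℝ) :
      0 ≤ RCLike.re M.trace * (c * c) + -2 * Fintype.card n * c + RCLike.re M⁻¹.trace := by
    have trace_nonneg : 0 ≤ ((1 - (c : 𝕜) • M)ᴴ * M⁻¹ * (1 - (c : 𝕜) • M)).trace :=
      (hM.inv.posSemidef.conjTranspose_mul_mul_same _).trace_nonneg
    rw [conjTranspose_one_sub_smul_mul_inv_mul_self hM.isHermitian hdet] at trace_nonneg
    have re_nonneg := (RCLike.nonneg_iff.mp trace_nonneg).1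
    simp only [trace_add, trace_sub, trace_smul, trace_one, smul_eq_mul, map_add, map_sub,
      RCLike.re_ofReal_mul, RCLike.natCast_re] at re_nonneg
    linarith
  have discrim_nonpos := discrim_le_zero quadratic_nonneg
  rw [discrim] at discrim_nonpos
  linarith

lemma trace_inv_smul_one {K : Type*} [Field K] (a : K) :
    ((a • (1 : Matrix n n K))⁻¹).trace = Fintype.card n / a := by
  obtain rfl | ha := eq_or_ne a 0
  · simp
  · have inv_smul_one : (a • (1 : Matrix n n K))⁻¹ = a⁻¹ • 1 := inv_eq_right_inv (by simp [ha])
    rw [inv_smul_one, trace_smul, trace_one, smul_eq_mul, div_eq_inv_mul]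

end TraceInverse

section Distortion

variable {𝕜 m n : Type*} [RCLike 𝕜] [Fintype m] [Fintype n]

lemma re_trace_conjTranspose_mul_diagonal_mul [DecidableEq m] (U : Matrix m n 𝕜)
    (b : m → ℝ) :
    RCLike.re (Uᴴ * diagonal (fun t => (b t : 𝕜)) * U).trace = ∑ t, b t * ∑ j, ‖U t j‖ ^ 2 := by
  have diag_entry (t : m) : (diagonal (fun t => (b t : 𝕜)) * (U * Uᴴ)) t t =
      ((b t * ∑ j, ‖U t j‖ ^ 2 : ℝ) : 𝕜) := by
    rw [diagonal_mul, mul_apply]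
    simp [RCLike.mul_conj]
  rw [Matrix.mul_assoc, trace_mul_comm, Matrix.mul_assoc]
  simp only [trace, diag_apply, diag_entry, map_sum, RCLike.ofReal_re]

/-- The variance `σ_{x,t}² = (P_x/s) ‖u_t‖²` of the `t`-th component of the signal `U θ`, where the
coefficient vector `θ` has covariance `(P_x/s) I_s`; here `s` is the number of columns of `U`. -/
noncomputable def signalVariance (Px : ℝ) (U : Matrix m n 𝕜) (t : m) : ℝ :=
  Px / Fintype.card n * ∑ j, ‖U t j‖ ^ 2

lemma sum_signalVariance [Nonempty n] [DecidableEq n] {U : Matrix m n 𝕜} (hU : Uᴴ * U = 1)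
    (Px : ℝ) : ∑ t, signalVariance Px U t = Px := by
  classical
  have sum_row_norm_sq : ∑ t, ∑ j, ‖U t j‖ ^ 2 = Fintype.card n := by
    simpa [hU] using (re_trace_conjTranspose_mul_diagonal_mul U 1).symm
  simp only [signalVariance]
  rw [← mul_sum, sum_row_norm_sq]
  field_simp

variable [DecidableEq m] [DecidableEq n]

/-- The matrix `(s/P_x) I_s + (1/σ_w²) U† B U` for the allocation `B = diag b`: the inverse of the
error covariance of the linear estimator. -/
noncomputable def precisionMatrix (Px σw2 : ℝ) (U : Matrix m n 𝕜) (b : m → ℝ) : Matrix n n 𝕜 :=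
  ((Fintype.card n / Px : ℝ) : 𝕜) • 1 + (σw2 : 𝕜)⁻¹ • (Uᴴ * diagonal (fun t => (b t : 𝕜)) * U)

/-- The distortion `ε̄(B) = tr[((s/P_x) I_s + (1/σ_w²) U† B U)⁻¹]` for `B = diag b`, as a real
number. -/
noncomputable def distortion (Px σw2 : ℝ) (U : Matrix m n 𝕜) (b : m → ℝ) : ℝ :=
  RCLike.re (precisionMatrix Px σw2 U b)⁻¹.trace

variable {Px σw2 : ℝ}

lemma precisionMatrix_posDef [Nonempty n] (hPx : 0 < Px) (hσ : 0 ≤ σw2) (U : Matrix m n 𝕜)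
    {b : m → ℝ} (hb : ∀ t, 0 ≤ b t) : (precisionMatrix Px σw2 U b).PosDef := by
  have prior : (((Fintype.card n / Px : ℝ) : 𝕜) • (1 : Matrix n n 𝕜)).PosDef :=
    PosDef.one.smul (RCLike.ofReal_pos.mpr (by positivity))
  have observation : (Uᴴ * diagonal (fun t => (b t : 𝕜)) * U).PosSemidef :=
    (PosSemidef.diagonal fun t => RCLike.ofReal_nonneg.mpr (hb t)).conjTranspose_mul_mul_same U
  refine prior.add_posSemidef (observation.smul ?_)
  exact_mod_cast inv_nonneg.mpr hσ

lemma re_trace_precisionMatrix [Nonempty n] (hPx : Px ≠ 0) (σw2 : ℝ) (U : Matrix m n 𝕜)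
    (b : m → ℝ) :
    RCLike.re (precisionMatrix Px σw2 U b).trace =
      Fintype.card n / Px * (Fintype.card n + (∑ t, b t * signalVariance Px U t) / σw2) := by
  have energy : ∑ t, b t * signalVariance Px U t =
      Px / Fintype.card n * ∑ t, b t * ∑ j, ‖U t j‖ ^ 2 := by
    simp only [signalVariance, mul_sum, mul_left_comm]
  have trace_split : RCLike.re (precisionMatrix Px σw2 U b).trace =
      Fintype.card n / Px * Fintype.card n + σw2⁻¹ * ∑ t, b t * ∑ j, ‖U t j‖ ^ 2 := by
    rw [precisionMatrix, trace_add, trace_smul, trace_smul, trace_one, ← RCLike.ofReal_inv,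
      smul_eq_mul, smul_eq_mul, map_add, RCLike.re_ofReal_mul, RCLike.re_ofReal_mul,
      RCLike.natCast_re, re_trace_conjTranspose_mul_diagonal_mul]
  rw [trace_split, energy]
  field_simp

lemma distortion_const {U : Matrix m n 𝕜} (hU : Uᴴ * U = 1) (c : ℝ) :
    distortion Px σw2 U (fun _ => c) = Fintype.card n / (Fintype.card n / Px + c / σw2) := by
  have scalar : precisionMatrix Px σw2 U (fun _ => c) =
      ((Fintype.card n / Px + c / σw2 : ℝ) : 𝕜) • 1 := by
    rw [precisionMatrix, ← smul_one_eq_diagonal, Matrix.mul_smul, Matrix.mul_one, Matrix.smul_mul,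
      hU, smul_smul, ← add_smul]
    push_cast
    rw [div_eq_inv_mul (c : 𝕜)]
  rw [distortion, scalar, trace_inv_smul_one]
  exact_mod_cast RCLike.ofReal_re (K := 𝕜) _

lemma div_one_add_le_distortion [Nonempty n] (hPx : 0 < Px) (hσ : 0 < σw2) (U : Matrix m n 𝕜)
    {b : m → ℝ} (hb : ∀ t, 0 ≤ b t) :
    Px / (1 + (∑ t, b t * signalVariance Px U t) / (Fintype.card n * σw2)) ≤
      distortion Px σw2 U b := by
  have energy_nonneg : 0 ≤ ∑ t, b t * signalVariance Px U t :=
    sum_nonneg fun t _ => mul_nonneg (hb t) (by unfold signalVariance; positivity)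
  have trace_bound := sq_card_le_re_trace_mul_re_trace_inv (precisionMatrix_posDef hPx hσ.le U hb)
  rw [re_trace_precisionMatrix hPx.ne'] at trace_bound
  rw [distortion]
  calc
    _ = (Fintype.card n : ℝ) ^ 2 / (Fintype.card n / Px *
          (Fintype.card n + (∑ t, b t * signalVariance Px U t) / σw2)) := by field_simp
    _ ≤ _ := (div_le_iff₀' (by positivity)).mpr trace_bound

theorem stmt_4_general [Nonempty n] {U : Matrix m n 𝕜} (hU : Uᴴ * U = 1) (hPx : 0 < Px)
    (hσ : 0 < σw2) {Etot : ℝ} (hEtot : 0 ≤ Etot) :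
    ((∀ _ : m, 0 ≤ Etot / Px) ∧ (∑ t, Etot / Px * signalVariance Px U t = Etot) ∧
      distortion Px σw2 U (fun _ => Etot / Px) = Px / (1 + Etot / (Fintype.card n * σw2))) ∧
    (∀ b : m → ℝ, (∀ t, 0 ≤ b t) → (∑ t, b t * signalVariance Px U t = Etot) →
      Px / (1 + Etot / (Fintype.card n * σw2)) ≤ distortion Px σw2 U b) := by
  refine ⟨⟨fun _ => by positivity, ?_, ?_⟩, ?_⟩
  · rw [← mul_sum, sum_signalVariance hU, div_mul_cancel₀ _ hPx.ne']
  · rw [distortion_const hU]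
    field_simp
  · rintro b hb rfl
    exact div_one_add_le_distortion hPx hσ U hb

end Distortion

/-- Off-line distortion minimization under a total energy constraint: the uniform allocation
`b_t = E_tot/P_x` is feasible and optimal, and the minimum of
`ε̄(B) = tr[((s/P_x)·I + (1/σ_w²)·Us† B Us)⁻¹]` over feasible diagonal `B ≥ 0` with
`Σ_t b_t·σ_{x,t}² = E_tot` equals `P_x/(1 + E_tot/(s·σ_w²))`. -/
theorem stmt_4 (s N : ℕ) (hs : 0 < s) (hN : 0 < N) (hsN : s ≤ N)
    (Us : Matrix (Fin N) (Fin s) ℂ) (hUs : Usᴴ * Us = 1)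
    (Px σw2 Etot : ℝ) (hPx : 0 < Px) (hσ : 0 < σw2) (hEtot : 0 ≤ Etot)
    (σx2 : Fin N → ℝ) (hσx2 : ∀ i, σx2 i = Px / s * rowNormSq Us i)
    (errBar : (Fin N → ℝ) → ℝ)
    (herrBar : ∀ b : Fin N → ℝ, errBar b =
      ((((s / Px : ℝ) : ℂ) • (1 : Matrix (Fin s) (Fin s) ℂ) +
        ((σw2 : ℝ) : ℂ)⁻¹ • (Usᴴ * Matrix.diagonal (fun t => ((b t : ℝ) : ℂ)) * Us))⁻¹).trace.re) :
    ((∀ t : Fin N, 0 ≤ Etot / Px) ∧ (∑ t, Etot / Px * σx2 t = Etot) ∧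
      errBar (fun _ => Etot / Px) = Px / (1 + Etot / (s * σw2))) ∧
    (∀ b : Fin N → ℝ, (∀ t, 0 ≤ b t) → (∑ t, b t * σx2 t = Etot) →
      Px / (1 + Etot / (s * σw2)) ≤ errBar b) := by
  have : Nonempty (Fin s) := Fin.pos_iff_nonempty.mp hs
  obtain rfl : σx2 = signalVariance Px Us := by
    funext i
    simp [hσx2, signalVariance, rowNormSq]
  obtain rfl : errBar = distortion Px σw2 Us := by
    funext b
    simp [herrBar, distortion, precisionMatrix]
  simpa using stmt_4_general hUs hPx hσ hEtot
end
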